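/- Let Γ be the fundamental group of a graph of groups 𝒢 based on a finite graph G, where every vertex group Γ_v is countable and every edge group is amenable. Then for every integer n ≥ 1 there exists a linear map Θ : ⊕_{v∈V(G)} H_b^n(Γ_v) → H_b^n(Γ) which is an isometric embedding with respect to the norm ‖(φ_1,…,φ_k)‖_∞ = max_v ‖φ_v‖_∞ on the direct sum, and which is a right inverse to the map ⊕_{v∈V(G)} H(i_v) : H_b^n(Γ) → ⊕_{v∈V(G)} H_b^n(Γ_v) induced by the inclusions i_v : Γ_v ↪ Γ. -/

import Mathlib

noncomputable section

namespace GrpBC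

/-- The sup-"norm" of a real valued function (the infimum of its bounds). -/
def supN {S : Type*} (f : S → ℝ) : ℝ := sInf {C : ℝ | 0 ≤ C ∧ ∀ s, |f s| ≤ C}

/-- A group is amenable if it admits a left-invariant finitely additive
probability measure defined on all subsets. -/
def IsAmenable (G : Type*) [Group G] : Prop :=
  ∃ m : Set G → ℝ, (∀ A, 0 ≤ m A) ∧ m Set.univ = 1 ∧
    (∀ A B, Disjoint A B → m (A ∪ B) = m A + m B) ∧
    (∀ (g : G) (A : Set G), m ((g * ·) '' A) = m A)

/-- An amenable `Γ`-set: a (nonempty) set on which `Γ` acts with amenable stabilizers. -/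
def IsAmenableAction (Γ : Type*) [Group Γ] (S : Type*) [MulAction Γ S] : Prop :=
  Nonempty S ∧ ∀ s : S, IsAmenable (MulAction.stabilizer Γ s)

/-- The homogeneous coboundary operator on functions on `S^{n+1}`. -/
def gcob (S : Type*) (n : ℕ) : ((Fin (n + 1) → S) → ℝ) →ₗ[ℝ] ((Fin (n + 2) → S) → ℝ) where
  toFun f := fun g => ∑ i : Fin (n + 2), ((-1 : ℝ) ^ (i : ℕ)) * f (g ∘ i.succAbove)
  map_add' f g := by
    funext τ
    simp [mul_add, Finset.sum_add_distrib]
  map_smul' r f := by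
    funext τ
    simp [Finset.mul_sum]
    congr 1
    funext i
    ring

/-- Bounded functions on `S^{n+1}` (the module `ℓ^∞(S^{n+1})`). -/
def bddF (S : Type*) (n : ℕ) : Submodule ℝ ((Fin (n + 1) → S) → ℝ) where
  carrier := {f | ∃ C, ∀ g, |f g| ≤ C}
  zero_mem' := ⟨0, fun g => by simp⟩
  add_mem' := by
    rintro f g ⟨C, hC⟩ ⟨D, hD⟩
    exact ⟨C + D, fun τ => (abs_add_le _ _).trans (add_le_add (hC τ) (hD τ))⟩
  smul_mem' := by
    rintro r f ⟨C, hC⟩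
    refine ⟨|r| * C, fun τ => ?_⟩
    calc |(r • f) τ| = |r| * |f τ| := by rw [Pi.smul_apply, smul_eq_mul, abs_mul]
    _ ≤ |r| * C := mul_le_mul_of_nonneg_left (hC τ) (abs_nonneg r)

/-- Alternating functions on `S^{n+1}`: they transform under permutations of the arguments
according to the sign of the permutation. -/
def altF (S : Type*) (n : ℕ) : Submodule ℝ ((Fin (n + 1) → S) → ℝ) where
  carrier := {f | ∀ (g : Fin (n + 1) → S) (π : Equiv.Perm (Fin (n + 1))),
    f (g ∘ π) = ((Equiv.Perm.sign π : ℤ) : ℝ) * f g}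
  zero_mem' := fun g π => by simp
  add_mem' := by
    intro f g hf hg τ π
    simp only [Pi.add_apply, hf τ π, hg τ π]
    ring
  smul_mem' := by
    intro r f hf τ π
    simp only [Pi.smul_apply, hf τ π, smul_eq_mul]
    ring

/-- `Γ`-invariant functions on `S^{n+1}` (for the diagonal action). -/
def invF (Γ : Type*) [Group Γ] (S : Type*) [MulAction Γ S] (n : ℕ) :
    Submodule ℝ ((Fin (n + 1) → S) → ℝ) where
  carrier := {f | ∀ (γ : Γ) (g : Fin (n + 1) → S), f (fun i => γ • g i) = f g}
  zero_mem' := fun γ g => rfl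
  add_mem' := by
    intro f g hf hg γ τ
    simp [Pi.add_apply, hf γ τ, hg γ τ]
  smul_mem' := by
    intro r f hf γ τ
    simp [Pi.smul_apply, hf γ τ]

variable (Γ : Type*) [Group Γ]

/-- Invariant bounded cochains of the homogeneous resolution of `Γ`. -/
def grpC (n : ℕ) : Submodule ℝ ((Fin (n + 1) → Γ) → ℝ) := bddF Γ n ⊓ invF Γ Γ n

/-- Invariant bounded cocycles. -/
def grpZ (n : ℕ) : Submodule ℝ ((Fin (n + 1) → Γ) → ℝ) :=
  grpC Γ n ⊓ LinearMap.ker (gcob Γ n)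

/-- Invariant bounded coboundaries. -/
def grpB : ∀ n : ℕ, Submodule ℝ ((Fin (n + 1) → Γ) → ℝ)
  | 0 => ⊥
  | (m + 1) => (grpC Γ m).map (gcob Γ m)

/-- The bounded cohomology `H_b^n(Γ)` of `Γ` with trivial real coefficients. -/
def Hb (n : ℕ) := grpZ Γ n ⧸ ((grpB Γ n).comap (grpZ Γ n).subtype)

instance (n : ℕ) : AddCommGroup (Hb Γ n) := Submodule.Quotient.addCommGroup _
instance (n : ℕ) : Module ℝ (Hb Γ n) := Submodule.Quotient.module _

variable {Γ}

/-- The class of an invariant bounded cocycle in bounded cohomology. -/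
def HbClass {n : ℕ} (f : grpZ Γ n) : Hb Γ n := Submodule.Quotient.mk f

/-- The canonical `ℓ^∞`-seminorm on bounded cohomology. -/
def hbNorm {n : ℕ} (φ : Hb Γ n) : ℝ :=
  sInf {r : ℝ | ∃ f : grpZ Γ n, HbClass f = φ ∧ r = supN f.1}

/-! ### Restriction maps -/

variable {Γ₁ : Type*} [Group Γ₁]

/-- Pullback of homogeneous cochains along a group homomorphism. -/
def pbG (φ : Γ₁ →* Γ) (n : ℕ) : ((Fin (n + 1) → Γ) → ℝ) →ₗ[ℝ] ((Fin (n + 1) → Γ₁) → ℝ) where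
  toFun f := fun g => f (fun i => φ (g i))
  map_add' f g := rfl
  map_smul' r f := rfl

lemma pbG_mem_grpZ (φ : Γ₁ →* Γ) (n : ℕ) {f : (Fin (n + 1) → Γ) → ℝ}
    (hf : f ∈ grpZ Γ n) : pbG φ n f ∈ grpZ Γ₁ n := by
  obtain ⟨⟨⟨C, hC⟩, hinv⟩, hker⟩ := hf
  refine ⟨⟨⟨C, fun g => hC _⟩, fun γ g => ?_⟩, ?_⟩
  · show f (fun i => φ (γ * g i)) = f (fun i => φ (g i))
    have : (fun i => φ (γ * g i)) = fun i => φ γ • φ (g i) := by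
      funext i
      simp [smul_eq_mul]
    rw [this]
    exact hinv (φ γ) (fun i => φ (g i))
  · have h0 : gcob Γ n f = 0 := hker
    show gcob Γ₁ n (pbG φ n f) = 0
    funext g
    have : gcob Γ₁ n (pbG φ n f) g = gcob Γ n f (fun i => φ (g i)) := by
      show (∑ i : Fin (n + 2), ((-1 : ℝ) ^ (i : ℕ)) * f (fun j => φ ((g ∘ i.succAbove) j)))
        = ∑ i : Fin (n + 2), ((-1 : ℝ) ^ (i : ℕ)) * f ((fun j => φ (g j)) ∘ i.succAbove)
      rfl
    rw [this, h0]
    rfl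

lemma pbG_mem_grpB (φ : Γ₁ →* Γ) (n : ℕ) {f : (Fin (n + 1) → Γ) → ℝ}
    (hf : f ∈ grpB Γ n) : pbG φ n f ∈ grpB Γ₁ n := by
  cases n with
  | zero =>
    have : f = 0 := hf
    simp [this, grpB]
  | succ m =>
    obtain ⟨u, ⟨⟨C, hC⟩, hinv⟩, rfl⟩ := hf
    refine ⟨pbG φ m u, ⟨⟨C, fun g => hC _⟩, fun γ g => ?_⟩, ?_⟩
    · show u (fun i => φ (γ * g i)) = u (fun i => φ (g i))
      have : (fun i => φ (γ * g i)) = fun i => φ γ • φ (g i) := by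
        funext i
        simp [smul_eq_mul]
      rw [this]
      exact hinv (φ γ) (fun i => φ (g i))
    · rfl

/-- The restriction map `H_b^n(Γ) → H_b^n(Γ₁)` induced by a group homomorphism
`Γ₁ → Γ`. -/
def hbRes (φ : Γ₁ →* Γ) (n : ℕ) : Hb Γ n →ₗ[ℝ] Hb Γ₁ n :=
  Submodule.mapQ _ _ ((pbG φ n).restrict (fun f hf => pbG_mem_grpZ φ n hf))
    (fun f hf => pbG_mem_grpB φ n hf)



/-! ### The complex of alternating bounded functions on a `Γ`-set -/

variable (Γ : Type*) [Group Γ] (S : Type*) [MulAction Γ S]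

/-- Invariant alternating bounded cochains on `S^{n+1}`:
`ℓ^∞_alt(S^{n+1})^Γ`. -/
def altC (n : ℕ) : Submodule ℝ ((Fin (n + 1) → S) → ℝ) :=
  (bddF S n ⊓ altF S n) ⊓ invF Γ S n

/-- Invariant alternating bounded cocycles `Zℓ^∞_alt(S^{n+1})^Γ`. -/
def ZS (n : ℕ) : Submodule ℝ ((Fin (n + 1) → S) → ℝ) :=
  altC Γ S n ⊓ LinearMap.ker (gcob S n)

/-- Coboundaries in the invariant alternating bounded complex. -/
def BS : ∀ n : ℕ, Submodule ℝ ((Fin (n + 1) → S) → ℝ)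
  | 0 => ⊥
  | (m + 1) => (altC Γ S m).map (gcob S m)

/-- The cohomology of the complex `ℓ^∞_alt(S^{•+1})^Γ`. -/
def HS (n : ℕ) := ZS Γ S n ⧸ ((BS Γ S n).comap (ZS Γ S n).subtype)

instance (n : ℕ) : AddCommGroup (HS Γ S n) := Submodule.Quotient.addCommGroup _
instance (n : ℕ) : Module ℝ (HS Γ S n) := Submodule.Quotient.module _

variable {Γ S}

/-- The class of a cocycle in the cohomology of `ℓ^∞_alt(S^{•+1})^Γ`. -/
def HSClass {n : ℕ} (f : ZS Γ S n) : HS Γ S n := Submodule.Quotient.mk f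

/-- The `ℓ^∞`-seminorm on the cohomology of `ℓ^∞_alt(S^{•+1})^Γ`. -/
def hsNorm {n : ℕ} (φ : HS Γ S n) : ℝ :=
  sInf {r : ℝ | ∃ f : ZS Γ S n, HSClass f = φ ∧ r = supN f.1}

/-- Pullback of cochains along the orbit map `g ↦ g • s₀`. -/
def pbOrb (s₀ : S) (n : ℕ) : ((Fin (n + 1) → S) → ℝ) →ₗ[ℝ] ((Fin (n + 1) → Γ) → ℝ) where
  toFun f := fun g => f (fun i => g i • s₀)
  map_add' f g := rfl
  map_smul' r f := rfl

lemma pbOrb_mem_grpZ (s₀ : S) (n : ℕ) {f : (Fin (n + 1) → S) → ℝ}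
    (hf : f ∈ ZS Γ S n) : pbOrb (Γ := Γ) s₀ n f ∈ grpZ Γ n := by
  obtain ⟨⟨⟨⟨C, hC⟩, -⟩, hinv⟩, hker⟩ := hf
  refine ⟨⟨⟨C, fun g => hC _⟩, fun γ g => ?_⟩, ?_⟩
  · show f (fun i => (γ * g i) • s₀) = f (fun i => g i • s₀)
    have : (fun i => (γ * g i) • s₀) = fun i => γ • (g i • s₀) := by
      funext i
      rw [mul_smul]
    rw [this]
    exact hinv γ (fun i => g i • s₀)
  · have h0 : gcob S n f = 0 := hker
    show gcob Γ n (pbOrb (Γ := Γ) s₀ n f) = 0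
    funext g
    have : gcob Γ n (pbOrb (Γ := Γ) s₀ n f) g = gcob S n f (fun i => g i • s₀) := rfl
    rw [this, h0]
    rfl

lemma pbOrb_mem_grpB (s₀ : S) (n : ℕ) {f : (Fin (n + 1) → S) → ℝ}
    (hf : f ∈ BS Γ S n) : pbOrb (Γ := Γ) s₀ n f ∈ grpB Γ n := by
  cases n with
  | zero =>
    have : f = 0 := hf
    simp [this, grpB]
  | succ m =>
    obtain ⟨u, ⟨⟨⟨C, hC⟩, -⟩, hinv⟩, rfl⟩ := hf
    refine ⟨pbOrb (Γ := Γ) s₀ m u, ⟨⟨C, fun g => hC _⟩, fun γ g => ?_⟩, ?_⟩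
    · show u (fun i => (γ * g i) • s₀) = u (fun i => g i • s₀)
      have : (fun i => (γ * g i) • s₀) = fun i => γ • (g i • s₀) := by
        funext i
        rw [mul_smul]
      rw [this]
      exact hinv γ (fun i => g i • s₀)
    · rfl

/-- The canonical map `Zℓ^∞_alt(S^{•+1})^Γ → H_b^•(Γ)` (realized by pulling back along
the orbit map of a point `s₀ ∈ S`; for an amenable action the induced map does not depend
on this choice). -/
def canHb (s₀ : S) (n : ℕ) (f : ZS Γ S n) : Hb Γ n :=
  HbClass ⟨pbOrb (Γ := Γ) s₀ n f.1, pbOrb_mem_grpZ s₀ n f.2⟩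

/-- The map `HS → H_b` induced in cohomology by pulling back along an orbit map. -/
def hsToHb (s₀ : S) (n : ℕ) : HS Γ S n →ₗ[ℝ] Hb Γ n :=
  Submodule.mapQ _ _ ((pbOrb (Γ := Γ) s₀ n).restrict (fun f hf => pbOrb_mem_grpZ s₀ n hf))
    (fun f hf => pbOrb_mem_grpB s₀ n hf)

/-! ### Graphs of groups and their fundamental groups (Serre) -/

/-- A graph in the sense of Serre: oriented edges with a fixed-point free involution. -/
structure SerreGraph where
  V : Type
  E : Type
  bar : E → E
  t : E → V
  bar_bar : ∀ e, bar (bar e) = e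
  bar_ne : ∀ e, bar e ≠ e

namespace SerreGraph

/-- The origin of an edge. -/
def o (G : SerreGraph) (e : G.E) : G.V := G.t (G.bar e)

/-- `IsWalk p v w` : `p` is a walk of (oriented) edges from `v` to `w`. -/
def IsWalk (G : SerreGraph) : List G.E → G.V → G.V → Prop
  | [], v, w => v = w
  | e :: p, v, w => G.o e = v ∧ G.IsWalk p (G.t e) w

/-- A walk is reduced if it has no backtracking. -/
def Reduced (G : SerreGraph) (p : List G.E) : Prop :=
  p.Chain' (fun e f => f ≠ G.bar e)

/-- A spanning tree of a graph: a symmetric set of edges connecting all the vertices and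
containing no nontrivial reduced loop. -/
def IsSpanningTree (G : SerreGraph) (T : Set G.E) : Prop :=
  (∀ e ∈ T, G.bar e ∈ T) ∧
  (∀ v w : G.V, ∃ p : List G.E, (∀ e ∈ p, e ∈ T) ∧ G.IsWalk p v w) ∧
  (∀ (v : G.V) (p : List G.E), p ≠ [] → (∀ e ∈ p, e ∈ T) → G.IsWalk p v v → ¬ G.Reduced p)

end SerreGraph

/-- A graph of groups on a graph `G`: vertex groups, edge groups (with the identification
`Γ_e = Γ_{ē}` given by the isomorphisms `barEquiv`) and injective structure morphisms
`h_e : Γ_e → Γ_{t(e)}`. -/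
structure GraphOfGroups (G : SerreGraph) where
  Gv : G.V → Type
  grpV : ∀ v, Group (Gv v)
  Ge : G.E → Type
  grpE : ∀ e, Group (Ge e)
  barEquiv : ∀ e, Ge e ≃* Ge (G.bar e)
  barEquiv_coh : ∀ (e : G.E) (a : Ge e), HEq (barEquiv (G.bar e) (barEquiv e a)) a
  h : ∀ e, Ge e →* Gv (G.t e)
  h_inj : ∀ e, Function.Injective (h e)

attribute [instance] GraphOfGroups.grpV GraphOfGroups.grpE

namespace GraphOfGroups

variable {G : SerreGraph} (𝒢 : GraphOfGroups G)

/-- The generators of the fundamental group of a graph of groups: the elements of the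
vertex groups together with the edges of the graph. -/
abbrev gens : Type := ((v : G.V) × 𝒢.Gv v) ⊕ G.E

/-- The relations defining the fundamental group of a graph of groups with respect to a
spanning tree `T`: multiplication in each vertex group; `ē = e⁻¹`;
`e (h_{ē}(ā)) e⁻¹ = h_e(a)` for every edge `e` and `a ∈ Γ_e`; and `e = 1` for `e ∈ T`. -/
def rels (T : Set G.E) : Set (FreeGroup 𝒢.gens) :=
  {w | (∃ (v : G.V) (g h' : 𝒢.Gv v),
          w = FreeGroup.of (Sum.inl ⟨v, g⟩) * FreeGroup.of (Sum.inl ⟨v, h'⟩) *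
            (FreeGroup.of (Sum.inl ⟨v, g * h'⟩))⁻¹) ∨
       (∃ e : G.E, w = FreeGroup.of (Sum.inr e) * FreeGroup.of (Sum.inr (G.bar e))) ∨
       (∃ (e : G.E) (a : 𝒢.Ge e),
          w = FreeGroup.of (Sum.inr e) *
            FreeGroup.of (Sum.inl ⟨G.t (G.bar e), 𝒢.h (G.bar e) (𝒢.barEquiv e a)⟩) *
            (FreeGroup.of (Sum.inr e))⁻¹ * (FreeGroup.of (Sum.inl ⟨G.t e, 𝒢.h e a⟩))⁻¹) ∨
       (∃ e ∈ T, w = FreeGroup.of (Sum.inr e))}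

/-- The fundamental group of a graph of groups with respect to a spanning tree `T`
(Serre). -/
def pi1 (T : Set G.E) : Type := PresentedGroup (𝒢.rels T)

instance (T : Set G.E) : Group (𝒢.pi1 T) := by unfold pi1; infer_instance

lemma mk_rel_one {T : Set G.E} {r : FreeGroup 𝒢.gens} (hr : r ∈ 𝒢.rels T) :
    PresentedGroup.mk (𝒢.rels T) r = 1 :=
  (QuotientGroup.eq_one_iff r).2 (Subgroup.subset_normalClosure hr)

/-- The canonical inclusion of a vertex group into the fundamental group of a graph of
groups. -/
def vtxIncl (T : Set G.E) (v : G.V) : 𝒢.Gv v →* 𝒢.pi1 T :=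
  MonoidHom.mk' (fun g => (PresentedGroup.of (rels := 𝒢.rels T) (Sum.inl ⟨v, g⟩))) (by
    intro g h'
    have hr : (FreeGroup.of (Sum.inl ⟨v, g⟩) * FreeGroup.of (Sum.inl ⟨v, h'⟩) *
        (FreeGroup.of (Sum.inl (⟨v, g * h'⟩ : (v : G.V) × 𝒢.Gv v)))⁻¹) ∈ 𝒢.rels T :=
      Or.inl ⟨v, g, h', rfl⟩
    have h1 := 𝒢.mk_rel_one hr
    rw [map_mul, map_mul, map_inv] at h1
    exact (mul_inv_eq_one.mp h1).symm)

/-- The image in the fundamental group of an edge of the graph. -/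
def edgeElt (T : Set G.E) (e : G.E) : 𝒢.pi1 T :=
  PresentedGroup.of (rels := 𝒢.rels T) (Sum.inr e)

end GraphOfGroups

/-!
A vertex `g Γ_v` of the Bass–Serre tree sees every other vertex through one of the edges that leave
it, and these edges form `Γ_v`-sets with amenable stabilizers. A bounded cochain of `Γ_v` can be
averaged, with invariant means of the stabilizers, to an alternating cochain on this set of
directions. Given at least three points of the tree, at most one vertex sees them in pairwise
different directions, so that the sum over all vertices of the averaged cochains has at most one
nonzero term. In degrees at least two the sum thus commutes with coboundaries and has the norm of
the largest summand. In degree two, coboundaries of bounded `1`-cochains are killed by first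
averaging over a mean on `Γ_v` which is stationary for a symmetric random walk: bounded bi-harmonic
functions are constant, so that invariant `1`-cochains average to constants. Restricted to `Γ_v`,
the sum is an average of the given cocycle, hence cohomologous to it.

Instead of the tree we use a `Γ`-set `Y` with equivariant projections to the directions, glued from
free actions of the vertex groups; reduced words show that the projections separate the vertices.
-/

open Filter Topology

/-! ### Bounded functions and means -/

/-- The space `ℓ^∞(X)` of bounded real functions on a set. For `X = Fin (n + 1) → S` it is
definitionally `bddF S n`. -/
def boundedFunctions (X : Type*) : Submodule ℝ (X → ℝ) where
  carrier := {f | ∃ C, ∀ x, |f x| ≤ C}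
  zero_mem' := ⟨0, fun _ => by simp⟩
  add_mem' := by
    rintro f g ⟨C, hC⟩ ⟨D, hD⟩
    exact ⟨C + D, fun x => (abs_add_le _ _).trans (add_le_add (hC x) (hD x))⟩
  smul_mem' := by
    rintro r f ⟨C, hC⟩
    refine ⟨|r| * C, fun x => ?_⟩
    rw [Pi.smul_apply, smul_eq_mul, abs_mul]
    exact mul_le_mul_of_nonneg_left (hC x) (abs_nonneg r)

section SupNorm

variable {X Y : Type*} {f : X → ℝ}

lemma const_mem_boundedFunctions (c : ℝ) : (fun _ : X => c) ∈ boundedFunctions X :=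
  ⟨|c|, fun _ => le_rfl⟩

lemma comp_mem_boundedFunctions (hf : f ∈ boundedFunctions X) (φ : Y → X) :
    (fun y => f (φ y)) ∈ boundedFunctions Y :=
  hf.imp fun _ hC y => hC (φ y)

lemma supN_nonneg (f : X → ℝ) : 0 ≤ supN f :=
  Real.sInf_nonneg fun _ h => h.1

lemma abs_le_supN (hf : f ∈ boundedFunctions X) (x : X) : |f x| ≤ supN f := by
  obtain ⟨C, hC⟩ := hf
  exact le_csInf ⟨max C 0, le_max_right _ _, fun s => (hC s).trans (le_max_left _ _)⟩
    fun D hD => hD.2 x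

lemma supN_le {C : ℝ} (hC₀ : 0 ≤ C) (hC : ∀ x, |f x| ≤ C) : supN f ≤ C :=
  csInf_le ⟨0, fun _ h => h.1⟩ ⟨hC₀, hC⟩

lemma supN_add_le {g : X → ℝ} (hf : f ∈ boundedFunctions X) (hg : g ∈ boundedFunctions X) :
    supN (f + g) ≤ supN f + supN g :=
  supN_le (add_nonneg (supN_nonneg f) (supN_nonneg g)) fun x =>
    (abs_add_le _ _).trans (add_le_add (abs_le_supN hf x) (abs_le_supN hg x))

lemma supN_smul_le (hf : f ∈ boundedFunctions X) {c : ℝ} (hc : 0 < c) :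
    supN (c • f) ≤ c * supN f :=
  supN_le (mul_nonneg hc.le (supN_nonneg f)) fun x => by
    rw [Pi.smul_apply, smul_eq_mul, abs_mul, abs_of_pos hc]
    exact mul_le_mul_of_nonneg_left (abs_le_supN hf x) hc.le

lemma supN_smul (hf : f ∈ boundedFunctions X) {c : ℝ} (hc : 0 < c) :
    supN (c • f) = c * supN f := by
  refine le_antisymm (supN_smul_le hf hc) ?_
  rw [← le_inv_mul_iff₀ hc]
  simpa [smul_smul, hc.ne'] using
    supN_smul_le (Submodule.smul_mem _ c hf) (inv_pos.2 hc)

end SupNorm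

/-- A mean on a set, that is, a normalised linear contraction `ℓ^∞(X) → ℝ`. For convenience the
functional is defined on all functions; its values on unbounded ones are irrelevant. -/
structure Mean (X : Type*) extends (X → ℝ) →ₗ[ℝ] ℝ where
  map_one' : toFun 1 = 1
  abs_le' : ∀ (f : X → ℝ) (C : ℝ), (∀ x, |f x| ≤ C) → |toFun f| ≤ C

namespace Mean

variable {X Y : Type*}

instance : FunLike (Mean X) (X → ℝ) ℝ where
  coe m := m.toFun
  coe_injective m₁ m₂ h := by
    cases m₁; cases m₂; congr 1; exact DFunLike.coe_injective h

instance : LinearMapClass (Mean X) ℝ (X → ℝ) ℝ where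
  map_add m := m.map_add'
  map_smulₛₗ m := m.map_smul'

lemma abs_apply_le (m : Mean X) {f : X → ℝ} {C : ℝ} (hC : ∀ x, |f x| ≤ C) : |m f| ≤ C :=
  m.abs_le' f C hC

lemma apply_const (m : Mean X) (c : ℝ) : m (fun _ => c) = c := by
  have h : (fun _ : X => c) = c • 1 := by ext; simp
  rw [h, map_smul, show m 1 = 1 from m.map_one', smul_eq_mul, mul_one]

lemma mono (m : Mean X) {f g : X → ℝ} (hf : f ∈ boundedFunctions X) (hg : g ∈ boundedFunctions X)
    (h : ∀ x, f x ≤ g x) : m f ≤ m g := by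
  obtain ⟨C, hC⟩ := Submodule.sub_mem _ hg hf
  -- `g - f` takes values in `[0, C]`, so it is within `C / 2` of the constant `C / 2`.
  have hdist : |m ((g - f) - fun _ => C / 2)| ≤ C / 2 := m.abs_apply_le fun x => by
    have := abs_le.1 (hC x)
    have := h x
    simp only [Pi.sub_apply] at *
    rw [abs_le]
    constructor <;> linarith
  rw [map_sub, map_sub, apply_const] at hdist
  linarith [abs_le.1 hdist]

lemma nonneg (m : Mean X) {f : X → ℝ} (hf : f ∈ boundedFunctions X) (h : ∀ x, 0 ≤ f x) :
    0 ≤ m f :=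
  m.apply_const 0 ▸ m.mono (const_mem_boundedFunctions 0) hf h

/-- Means extend from any space of bounded functions containing the constants (Hahn–Banach). -/
lemma exists_extension (E : Submodule ℝ (X → ℝ)) (hE : E ≤ boundedFunctions X)
    (φ : E →ₗ[ℝ] ℝ) (one_mem : 1 ∈ E) (map_one : φ ⟨1, one_mem⟩ = 1)
    (hφ : ∀ (f : E) (C : ℝ), (∀ x, |f.1 x| ≤ C) → |φ f| ≤ C) :
    ∃ m : Mean X, ∀ f : E, m f.1 = φ f := by
  let φ' : boundedFunctions X →ₗ.[ℝ] ℝ :=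
    ⟨E.comap (boundedFunctions X).subtype, φ.comp ((boundedFunctions X).subtype.restrict
      fun _ h => h)⟩
  obtain ⟨ψ, hψφ, hψ⟩ := exists_extension_of_le_sublinear φ' (fun f => supN f.1)
    (fun c hc f => supN_smul f.2 hc) (fun f g => supN_add_le f.2 g.2)
    (fun f => (le_abs_self _).trans (hφ ⟨f.1.1, f.2⟩ _ (abs_le_supN f.1.2)))
  obtain ⟨m, hm⟩ := LinearMap.exists_extend ψ
  have hmψ (f : boundedFunctions X) : m f.1 = ψ f := LinearMap.congr_fun hm f
  have hmφ (f : E) : m f.1 = φ f := (hmψ ⟨f.1, hE f.2⟩).trans (hψφ ⟨⟨f.1, hE f.2⟩, f.2⟩)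
  have hle (f : X → ℝ) (hf : f ∈ boundedFunctions X) : m f ≤ supN f :=
    (hmψ ⟨f, hf⟩).trans_le (hψ _)
  have hX : Nonempty X := by
    by_contra hX
    have h := hφ ⟨1, one_mem⟩ 0 fun x => (hX ⟨x⟩).elim
    norm_num [map_one] at h
  refine ⟨⟨m, (hmφ ⟨1, one_mem⟩).trans map_one, fun f C hC => ?_⟩, hmφ⟩
  change |m f| ≤ C
  have hC₀ : 0 ≤ C := (abs_nonneg _).trans (hC hX.some)
  have hneg : m (-f) ≤ C := (hle _ (Submodule.neg_mem _ ⟨C, hC⟩)).trans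
    (supN_le hC₀ fun x => by simpa using hC x)
  rw [map_neg] at hneg
  exact abs_le.2 ⟨by linarith, (hle f ⟨C, hC⟩).trans (supN_le hC₀ hC)⟩

/-- The push-forward of a mean. -/
def map (m : Mean X) (φ : X → Y) : Mean Y where
  toLinearMap := m.toLinearMap.comp (LinearMap.funLeft ℝ ℝ φ)
  map_one' := m.map_one'
  abs_le' _ _ hC := m.abs_apply_le fun x => hC (φ x)

lemma map_apply (m : Mean X) (φ : X → Y) (f : Y → ℝ) : m.map φ f = m fun x => f (φ x) := rfl

/-- The average of a family of means with respect to a mean on the index set. -/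
def bind (m : Mean X) (k : X → Mean Y) : Mean Y where
  toLinearMap := m.toLinearMap.comp (LinearMap.pi fun x => (k x).toLinearMap)
  map_one' := (congrArg m (funext fun x => (k x).map_one')).trans m.map_one'
  abs_le' _ _ hC := m.abs_apply_le fun x => (k x).abs_apply_le hC

/-- The Dirac mean at a point. -/
def dirac (x : X) : Mean X where
  toLinearMap := LinearMap.proj x
  map_one' := rfl
  abs_le' _ _ hC := hC x

lemma sq_apply_le (m : Mean X) {f : X → ℝ} (hf : f ∈ boundedFunctions X) :
    m f ^ 2 ≤ m fun x => f x ^ 2 := by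
  obtain ⟨C, hC⟩ := hf
  have hsq : (fun x => (f x - m f) ^ 2) =
      (fun x => f x ^ 2) - (2 * m f) • f + fun _ => m f ^ 2 := by
    ext x
    simp only [Pi.add_apply, Pi.sub_apply, Pi.smul_apply, smul_eq_mul]
    ring
  have hbdd : (fun x => (f x - m f) ^ 2) ∈ boundedFunctions X := by
    refine ⟨(C + C) ^ 2, fun x => ?_⟩
    rw [abs_pow]
    gcongr
    exact (abs_sub _ _).trans (add_le_add (hC x) (m.abs_apply_le hC))
  have hvar := m.nonneg hbdd fun x => sq_nonneg _
  rw [hsq, map_add, map_sub, map_smul, apply_const, smul_eq_mul] at hvar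
  linarith

end Mean

/-! ### Banach limits -/

/-- Averages of the first terms of a sequence. -/
def cesaro (a : ℕ → ℝ) (k : ℕ) : ℝ := (∑ j ∈ Finset.range (k + 1), a j) / (k + 1)

lemma abs_cesaro_le {a : ℕ → ℝ} {C : ℝ} (hC : ∀ k, |a k| ≤ C) (k : ℕ) : |cesaro a k| ≤ C := by
  have hk : (0 : ℝ) < k + 1 := by positivity
  rw [cesaro, abs_div, abs_of_pos hk, div_le_iff₀ hk]
  calc |∑ j ∈ Finset.range (k + 1), a j| ≤ ∑ j ∈ Finset.range (k + 1), |a j| :=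
        Finset.abs_sum_le_sum_abs _ _
    _ ≤ ∑ _j ∈ Finset.range (k + 1), C := Finset.sum_le_sum fun j _ => hC j
    _ = C * (k + 1) := by rw [Finset.sum_const, Finset.card_range, nsmul_eq_mul]; push_cast; ring

lemma tendsto_cesaro_shift_sub {a : ℕ → ℝ} (ha : a ∈ boundedFunctions ℕ) :
    Tendsto (cesaro fun k => a (k + 1) - a k) atTop (𝓝 0) := by
  obtain ⟨C, hC⟩ := ha
  have h0 : Tendsto (fun k : ℕ => (C + C) * (1 / ((k : ℝ) + 1))) atTop (𝓝 0) := by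
    simpa using (tendsto_one_div_add_atTop_nhds_zero_nat (𝕜 := ℝ)).const_mul (C + C)
  refine squeeze_zero_norm (fun k => ?_) h0
  rw [cesaro, Finset.sum_range_sub, norm_div, Real.norm_eq_abs, Real.norm_eq_abs,
    abs_of_pos (by positivity : (0 : ℝ) < k + 1), mul_one_div]
  gcongr
  exact (abs_sub _ _).trans (add_le_add (hC _) (hC _))

lemma Mean.exists_eq_lim :
    ∃ ν : Mean ℕ, ∀ (a : ℕ → ℝ) (l : ℝ), Tendsto a atTop (𝓝 l) → ν a = l := by
  let E : Submodule ℝ (ℕ → ℝ) :=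
    { carrier := {a | ∃ l, Tendsto a atTop (𝓝 l)}
      zero_mem' := ⟨0, tendsto_const_nhds⟩
      add_mem' := fun ⟨k, hk⟩ ⟨l, hl⟩ => ⟨k + l, hk.add hl⟩
      smul_mem' := fun c _ ⟨l, hl⟩ => ⟨c • l, hl.const_smul c⟩ }
  choose lim hlim using fun a : E => a.2
  let φ : E →ₗ[ℝ] ℝ :=
    { toFun := lim
      map_add' := fun a b => tendsto_nhds_unique (hlim (a + b)) ((hlim a).add (hlim b))
      map_smul' := fun c a => tendsto_nhds_unique (hlim (c • a)) ((hlim a).const_smul c) }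
  have hE : E ≤ boundedFunctions ℕ := fun a ⟨l, hl⟩ =>
    (Metric.isBounded_range_of_tendsto a hl).exists_norm_le.imp fun C hC k => hC _ ⟨k, rfl⟩
  obtain ⟨ν, hν⟩ := Mean.exists_extension E hE φ ⟨1, tendsto_const_nhds⟩
    (tendsto_nhds_unique (hlim _) tendsto_const_nhds)
    (fun a C hC => le_of_tendsto' (hlim a).abs hC)
  exact ⟨ν, fun a l hl => (hν ⟨a, l, hl⟩).trans (tendsto_nhds_unique (hlim _) hl)⟩

lemma Mean.exists_shift_invariant :
    ∃ ν : Mean ℕ, ∀ a ∈ boundedFunctions ℕ, ν (fun k => a (k + 1)) = ν a := by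
  obtain ⟨ν, hν⟩ := Mean.exists_eq_lim
  let cesaroMap : (ℕ → ℝ) →ₗ[ℝ] (ℕ → ℝ) :=
    { toFun := cesaro
      map_add' := fun a b => by ext k; simp [cesaro, Finset.sum_add_distrib, add_div]
      map_smul' := fun c a => by ext k; simp [cesaro, ← Finset.mul_sum, mul_div_assoc] }
  have hone : cesaroMap 1 = 1 := by
    ext k
    have hk : (k : ℝ) + 1 ≠ 0 := by positivity
    simp [cesaroMap, cesaro, hk]
  refine ⟨⟨ν.toLinearMap.comp cesaroMap, ?_, fun a C hC => ν.abs_apply_le (abs_cesaro_le hC)⟩,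
    fun a ha => ?_⟩
  · exact (congrArg ν hone).trans (ν.apply_const 1)
  · refine sub_eq_zero.1 (Eq.trans ?_ (hν _ 0 (tendsto_cesaro_shift_sub ha)))
    exact ((ν.toLinearMap.comp cesaroMap).map_sub (fun k => a (k + 1)) a).symm

/-! ### The invariant mean of an amenable group -/

section FinitelyAdditive

open MeasureTheory

variable {X : Type*}

/-- The space of functions with finite range, dense in `ℓ^∞(X)`. -/
def finiteRangeFunctions (X : Type*) : Submodule ℝ (X → ℝ) where
  carrier := {f | (Set.range f).Finite}
  zero_mem' := (Set.finite_singleton 0).subset (Set.range_subset_iff.2 fun _ => rfl)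
  add_mem' := fun {f g} hf hg => (hf.image2 (· + ·) hg).subset
    (Set.range_subset_iff.2 fun x => ⟨f x, ⟨x, rfl⟩, g x, ⟨x, rfl⟩, rfl⟩)
  smul_mem' := fun c f hf => (hf.image (c * ·)).subset
    (Set.range_subset_iff.2 fun x => ⟨f x, ⟨x, rfl⟩, rfl⟩)

lemma finiteRangeFunctions_le : finiteRangeFunctions X ≤ boundedFunctions X := fun _ hf =>
  hf.isBounded.exists_norm_le.imp fun _ hC x => hC _ ⟨x, rfl⟩

lemma exists_finiteRange_abs_sub_le {f : X → ℝ} (hf : f ∈ boundedFunctions X) {ε : ℝ}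
    (hε : 0 < ε) : ∃ g ∈ finiteRangeFunctions X, ∀ x, |f x - g x| ≤ ε := by
  obtain ⟨C, hC⟩ := hf
  refine ⟨fun x => ε * ⌊f x / ε⌋, ?_, fun x => ?_⟩
  · refine ((Set.finite_Icc ⌊-C / ε⌋ ⌊C / ε⌋).image fun z : ℤ => ε * (z : ℝ)).subset
      (Set.range_subset_iff.2 fun x => ⟨⌊f x / ε⌋, ⟨?_, ?_⟩, rfl⟩)
    all_goals
      have := abs_le.1 (hC x)
      gcongr
      linarith
  · have hfloor : f x - ε * ⌊f x / ε⌋ = ε * Int.fract (f x / ε) := by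
      rw [Int.fract]
      field_simp
    rw [hfloor, abs_of_nonneg (mul_nonneg hε.le (Int.fract_nonneg _))]
    exact mul_le_of_le_one_right hε.le (Int.fract_lt_one _).le

lemma Mean.eqOn_boundedFunctions_of_eqOn_finiteRange {m m' : Mean X}
    (h : ∀ g ∈ finiteRangeFunctions X, m g = m' g) {f : X → ℝ} (hf : f ∈ boundedFunctions X) :
    m f = m' f := by
  refine eq_of_forall_dist_le fun ε hε => ?_
  obtain ⟨g, hg, hfg⟩ := exists_finiteRange_abs_sub_le hf (half_pos hε)
  calc |m f - m' f| = |m (f - g) - m' (f - g)| := by rw [map_sub, map_sub, h g hg]; congr 1; ring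
    _ ≤ |m (f - g)| + |m' (f - g)| := abs_sub _ _
    _ ≤ ε / 2 + ε / 2 := add_le_add (m.abs_apply_le hfg) (m'.abs_apply_le hfg)
    _ = ε := add_halves ε

/-- Finitely additive probability measures, defined on all subsets. -/
structure IsFinitelyAdditiveProbability (m : Set X → ℝ) : Prop where
  nonneg : ∀ A, 0 ≤ m A
  univ_eq : m Set.univ = 1
  union : ∀ A B, Disjoint A B → m (A ∪ B) = m A + m B

namespace IsFinitelyAdditiveProbability

variable {m : Set X → ℝ} (hm : IsFinitelyAdditiveProbability m)
include hm

lemma empty_eq : m ∅ = 0 := by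
  have h := hm.union ∅ ∅ (Set.disjoint_empty _)
  rw [Set.union_self] at h
  linarith

lemma sum_preimage_singleton (f : X → ℝ) (s : Finset ℝ) :
    ∑ r ∈ s, m (f ⁻¹' {r}) = m (f ⁻¹' s) := by
  induction s using Finset.induction_on with
  | empty => simpa using hm.empty_eq.symm
  | insert r s hr ih =>
    rw [Finset.sum_insert hr, ih, Finset.coe_insert, Set.insert_eq, Set.preimage_union, hm.union]
    exact Disjoint.preimage f (by simpa using hr)

lemma abs_sum_mul_preimage_le {f : X → ℝ} (hf : (Set.range f).Finite) {C : ℝ}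
    (hC : ∀ x, |f x| ≤ C) : |∑ r ∈ hf.toFinset, r * m (f ⁻¹' {r})| ≤ C := by
  calc |∑ r ∈ hf.toFinset, r * m (f ⁻¹' {r})|
      ≤ ∑ r ∈ hf.toFinset, |r * m (f ⁻¹' {r})| := Finset.abs_sum_le_sum_abs _ _
    _ ≤ ∑ r ∈ hf.toFinset, C * m (f ⁻¹' {r}) := Finset.sum_le_sum fun r hr => by
        obtain ⟨x, rfl⟩ := hf.mem_toFinset.1 hr
        rw [abs_mul, abs_of_nonneg (hm.nonneg _)]
        exact mul_le_mul_of_nonneg_right (hC x) (hm.nonneg _)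
    _ = C := by
        rw [← Finset.mul_sum, hm.sum_preimage_singleton, hf.coe_toFinset, Set.preimage_range,
          hm.univ_eq, mul_one]

-- Linearity comes from the simple functions for the discrete `σ`-algebra.
lemma exists_linearMap_eq_sum : ∃ φ : finiteRangeFunctions X →ₗ[ℝ] ℝ,
    ∀ f : finiteRangeFunctions X, φ f = ∑ r ∈ Set.Finite.toFinset f.2, r * m (f.1 ⁻¹' {r}) := by
  let : MeasurableSpace X := ⊤
  let T (A : Set X) : ℝ →L[ℝ] ℝ := m A • ContinuousLinearMap.id ℝ ℝ
  have hT : FinMeasAdditive (0 : Measure X) T := fun A B _ _ _ _ hAB => by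
    simp only [T, hm.union A B hAB, add_smul]
  let toSimple (f : finiteRangeFunctions X) : SimpleFunc X ℝ :=
    ⟨f.1, fun _ => MeasurableSpace.measurableSet_top, f.2⟩
  refine ⟨⟨⟨fun f => (toSimple f).setToSimpleFunc T, fun f g => ?_⟩, fun c f => ?_⟩, fun f => ?_⟩
  · rw [← SimpleFunc.setToSimpleFunc_add T hT integrable_zero_measure integrable_zero_measure]
    exact congrArg _ (SimpleFunc.ext fun _ => rfl)
  · have h := SimpleFunc.setToSimpleFunc_smul_real T hT c (f := toSimple f)
      integrable_zero_measure
    exact (congrArg _ (SimpleFunc.ext fun _ => rfl)).trans h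
  · refine Finset.sum_congr rfl fun r _ => ?_
    exact mul_comm (m (f.1 ⁻¹' {r})) r

lemma exists_mean_eq_sum : ∃ μ : Mean X, ∀ (f : X → ℝ) (hf : (Set.range f).Finite),
    μ f = ∑ r ∈ hf.toFinset, r * m (f ⁻¹' {r}) := by
  obtain ⟨φ, hφ⟩ := hm.exists_linearMap_eq_sum
  have one_mem : (Set.range (1 : X → ℝ)).Finite := Set.finite_range_const
  have map_one : φ ⟨1, one_mem⟩ = 1 := calc
    φ ⟨1, one_mem⟩ = ∑ r ∈ one_mem.toFinset, r * m ((1 : X → ℝ) ⁻¹' {r}) := hφ _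
    _ = ∑ r ∈ one_mem.toFinset, m ((1 : X → ℝ) ⁻¹' {r}) := Finset.sum_congr rfl fun r hr => by
        obtain ⟨x, rfl⟩ := one_mem.mem_toFinset.1 hr
        exact one_mul _
    _ = 1 := by
        rw [hm.sum_preimage_singleton, one_mem.coe_toFinset, Set.preimage_range, hm.univ_eq]
  obtain ⟨μ, hμ⟩ := Mean.exists_extension _ finiteRangeFunctions_le φ one_mem map_one
    fun f C hC => hφ f ▸ hm.abs_sum_mul_preimage_le f.2 hC
  exact ⟨μ, fun f hf => (hμ ⟨f, hf⟩).trans (hφ ⟨f, hf⟩)⟩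

end IsFinitelyAdditiveProbability

end FinitelyAdditive

lemma isAmenable_of_subsingleton (Λ : Type*) [Group Λ] [Subsingleton Λ] : IsAmenable Λ := by
  refine ⟨fun A => A.indicator 1 1, fun A => ?_, by simp, fun A B hAB => ?_, fun g A => ?_⟩
  · exact Set.indicator_nonneg (fun _ _ => zero_le_one) _
  · exact congrFun (Set.indicator_union_of_disjoint hAB 1) 1
  · simp [Subsingleton.elim g 1]

lemma IsAmenable.of_surjective {Λ Λ' : Type*} [Group Λ] [Group Λ'] (hΛ : IsAmenable Λ)
    {f : Λ →* Λ'} (hf : Function.Surjective f) : IsAmenable Λ' := by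
  obtain ⟨m, nonneg, univ_eq, union, invariant⟩ := hΛ
  refine ⟨fun A => m (f ⁻¹' A), fun A => nonneg _, univ_eq,
    fun A B hAB => union _ _ (hAB.preimage f), fun g A => ?_⟩
  obtain ⟨x, rfl⟩ := hf g
  have : f ⁻¹' ((f x * ·) '' A) = (x * ·) '' (f ⁻¹' A) := by
    ext y
    simp [Set.image_mul_left]
  exact (congrArg m this).trans (invariant x _)

lemma IsAmenable.exists_mean {H : Type*} [Group H] (hH : IsAmenable H) :
    ∃ μ : Mean H, ∀ f ∈ boundedFunctions H, ∀ g : H, μ (fun x => f (g * x)) = μ f := by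
  obtain ⟨m, nonneg, univ_eq, union, invariant⟩ := hH
  obtain ⟨μ, hμ⟩ := IsFinitelyAdditiveProbability.exists_mean_eq_sum ⟨nonneg, univ_eq, union⟩
  refine ⟨μ, fun f hf g => Mean.eqOn_boundedFunctions_of_eqOn_finiteRange
    (m := μ.map (g * ·)) (fun u hu => ?_) hf⟩
  have hrange : Set.range (fun x => u (g * x)) = Set.range u :=
    (mul_left_surjective g).range_comp u
  have hu' : (Set.range fun x => u (g * x)).Finite := hrange ▸ hu
  have hpre (r : ℝ) : (g * ·) '' ((fun x => u (g * x)) ⁻¹' {r}) = u ⁻¹' {r} :=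
    Set.image_preimage_eq (u ⁻¹' {r}) (mul_left_surjective g)
  rw [Mean.map_apply, hμ _ hu', hμ _ hu]
  refine Finset.sum_congr (Set.Finite.toFinset_inj.2 hrange) fun r _ => ?_
  rw [← hpre, invariant]

/-! ### Random walks and bi-harmonic functions -/

namespace Mean

variable {X Y : Type*}

lemma tendsto_of_tendstoUniformly (m : Mean X) {l : Filter Y} {F : Y → X → ℝ} {f : X → ℝ}
    (h : TendstoUniformly F f l) : Tendsto (fun y => m (F y)) l (𝓝 (m f)) := by
  refine Metric.tendsto_nhds.2 fun ε hε => ?_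
  filter_upwards [Metric.tendstoUniformly_iff.1 h (ε / 2) (half_pos hε)] with y hy
  have hle : |m (F y - f)| ≤ ε / 2 := m.abs_apply_le fun x => (dist_comm (F y x) _ ▸ hy x).le
  rw [Real.dist_eq, ← map_sub]
  linarith

variable {w : X → ℝ}

lemma summable_mul_of_bounded (hw : ∀ x, 0 ≤ w x) (hsum : Summable w) {f : X → ℝ}
    (hf : f ∈ boundedFunctions X) : Summable fun x => w x * f x := by
  obtain ⟨C, hC⟩ := hf
  refine Summable.of_norm_bounded (hsum.mul_right C) fun x => ?_
  rw [norm_mul, Real.norm_of_nonneg (hw x)]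
  exact mul_le_mul_of_nonneg_left (hC x) (hw x)

lemma exists_eq_tsum (hw : ∀ x, 0 ≤ w x) (hsum : HasSum w 1) :
    ∃ P : Mean X, ∀ f ∈ boundedFunctions X, P f = ∑' x, w x * f x := by
  have summable (f : boundedFunctions X) := summable_mul_of_bounded hw hsum.summable f.2
  let φ : boundedFunctions X →ₗ[ℝ] ℝ :=
    { toFun f := ∑' x, w x * f.1 x
      map_add' f g := by
        rw [← (summable f).tsum_add (summable g)]
        exact tsum_congr fun x => mul_add _ _ _
      map_smul' c f := by
        rw [RingHom.id_apply, smul_eq_mul, ← tsum_mul_left]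
        exact tsum_congr fun x => mul_left_comm _ _ _ }
  obtain ⟨P, hP⟩ := exists_extension _ le_rfl φ (const_mem_boundedFunctions 1)
    (by simp [φ, hsum.tsum_eq]) fun f C hC => by
      have hC' : HasSum (fun x => w x * C) C := by simpa using hsum.mul_right C
      refine tsum_of_norm_bounded (f := fun x => w x * f.1 x) hC' fun x => ?_
      rw [norm_mul, Real.norm_of_nonneg (hw x)]
      exact mul_le_mul_of_nonneg_left (hC x) (hw x)
  exact ⟨P, fun f hf => hP ⟨f, hf⟩⟩

lemma apply_tsum (m : Mean Y) (hw : ∀ x, 0 ≤ w x) (hsum : Summable w) {F : X → Y → ℝ} {C : ℝ}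
    (hC : ∀ x y, |F x y| ≤ C) : m (fun y => ∑' x, w x * F x y) = ∑' x, w x * m (F x) := by
  refine (HasSum.tsum_eq ?_).symm
  have huniform := tendstoUniformly_tsum (f := fun x y => w x * F x y) (hsum.mul_right C)
    fun x y => by
      rw [norm_mul, Real.norm_of_nonneg (hw x)]
      exact mul_le_mul_of_nonneg_left (hC x y) (hw x)
  refine (m.tendsto_of_tendstoUniformly huniform).congr fun A => ?_
  have hsmul : (fun y => ∑ x ∈ A, w x * F x y) = ∑ x ∈ A, w x • F x := by ext; simp
  rw [hsmul, map_sum]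
  exact Finset.sum_congr rfl fun x _ => map_smul m (w x) (F x)

end Mean

/-- The properties of the step distribution of a symmetric, non-degenerate random walk on `Λ` that
are used below. `apply_comm` is Fubini's theorem against an arbitrary finitely additive mean, and
expresses countable additivity of `P`. -/
structure IsSymmetricWalk {Λ : Type*} [Group Λ] (P : Mean Λ) : Prop where
  apply_inv : ∀ f ∈ boundedFunctions Λ, P (fun s => f s⁻¹) = P f
  eq_zero_of_apply_le_zero : ∀ f ∈ boundedFunctions Λ, (∀ s, 0 ≤ f s) → P f ≤ 0 → ∀ s, f s = 0
  apply_comm : ∀ (m : Mean Λ) (F : Λ → Λ → ℝ) (C : ℝ), (∀ s x, |F s x| ≤ C) →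
    m (fun x => P fun s => F s x) = P fun s => m (F s)

section RandomWalk

variable {Λ : Type*} [Group Λ]

lemma exists_pos_symmetric_hasSum_one (Λ : Type*) [Group Λ] [Countable Λ] :
    ∃ w : Λ → ℝ, (∀ s, 0 < w s) ∧ HasSum w 1 ∧ ∀ s, w s⁻¹ = w s := by
  have := Encodable.ofCountable Λ
  obtain ⟨f, hf, c, hc, -⟩ := posSumOfEncodable one_pos Λ
  have hc₀ : 0 < c := hc.tsum_eq ▸ hc.summable.tsum_pos (fun s => (hf s).le) 1 (hf 1)
  have hinv : HasSum (fun s => f s⁻¹) c := (Equiv.inv Λ).hasSum_iff.2 hc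
  refine ⟨fun s => (f s + f s⁻¹) / (c + c), fun s => ?_, ?_, fun s => by simp [add_comm]⟩
  · exact div_pos (add_pos (hf s) (hf s⁻¹)) (add_pos hc₀ hc₀)
  · exact div_self (add_pos hc₀ hc₀).ne' ▸ (hc.add hinv).div_const (c + c)

lemma exists_isSymmetricWalk (Λ : Type*) [Group Λ] [Countable Λ] :
    ∃ P : Mean Λ, IsSymmetricWalk P := by
  obtain ⟨w, w_pos, w_sum, w_inv⟩ := exists_pos_symmetric_hasSum_one Λ
  have w_nonneg (s : Λ) : 0 ≤ w s := (w_pos s).le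
  obtain ⟨P, hP⟩ := Mean.exists_eq_tsum w_nonneg w_sum
  refine ⟨P, fun f hf => ?_, fun f hf hf₀ hPf s => ?_, fun m F C hC => ?_⟩
  · rw [hP _ (comp_mem_boundedFunctions hf _), hP f hf, ← (Equiv.inv Λ).tsum_eq]
    exact tsum_congr fun s => by simp [w_inv]
  · have hterm : w s * f s ≤ 0 := ((Mean.summable_mul_of_bounded w_nonneg w_sum.summable hf).le_tsum
      s fun t _ => mul_nonneg (w_nonneg t) (hf₀ t)).trans (hP f hf ▸ hPf)
    exact le_antisymm (nonpos_of_mul_nonpos_right hterm (w_pos s)) (hf₀ s)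
  · rw [hP _ ⟨C, fun s => m.abs_apply_le (hC s)⟩, ← m.apply_tsum w_nonneg w_sum.summable hC]
    exact congrArg m (funext fun x => hP _ ⟨C, fun s => hC s x⟩)

/-- The Markov operator of the left random walk with step distribution `P`. -/
def leftAverage (P : Mean Λ) : Module.End ℝ (Λ → ℝ) :=
  LinearMap.pi fun x => P.toLinearMap.comp (LinearMap.funLeft ℝ ℝ (· * x))

/-- The Markov operator of the right random walk with step distribution `P`. -/
def rightAverage (P : Mean Λ) : Module.End ℝ (Λ → ℝ) :=
  LinearMap.pi fun x => P.toLinearMap.comp (LinearMap.funLeft ℝ ℝ (x * ·))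

section Markov

variable (P : Mean Λ) {f : Λ → ℝ}

lemma leftAverage_apply (f : Λ → ℝ) (x : Λ) : leftAverage P f x = P fun s => f (s * x) := rfl

lemma rightAverage_apply (f : Λ → ℝ) (x : Λ) : rightAverage P f x = P fun s => f (x * s) := rfl

lemma abs_leftAverage_pow_le {C : ℝ} (hC : ∀ x, |f x| ≤ C) (k : ℕ) (x : Λ) :
    |(leftAverage P ^ k) f x| ≤ C := by
  induction k generalizing x with
  | zero => exact hC x
  | succ k ih => rw [pow_succ']; exact P.abs_apply_le fun s => ih (s * x)

lemma le_leftAverage_pow (hf : f ∈ boundedFunctions Λ) (h : ∀ x, f x ≤ leftAverage P f x) (k : ℕ)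
    (x : Λ) : f x ≤ (leftAverage P ^ k) f x := by
  induction k generalizing x with
  | zero => exact le_rfl
  | succ k ih =>
    obtain ⟨C, hC⟩ := hf
    rw [pow_succ']
    exact (h x).trans (P.mono (comp_mem_boundedFunctions ⟨C, hC⟩ (· * x))
      ⟨C, fun s => abs_leftAverage_pow_le P hC k (s * x)⟩ fun s => ih (s * x))

lemma exists_leftAverage_stationary :
    ∃ m : Mean Λ, ∀ f ∈ boundedFunctions Λ, m (leftAverage P f) = m f := by
  obtain ⟨ν, hν⟩ := Mean.exists_shift_invariant
  let orbit : (Λ → ℝ) →ₗ[ℝ] (ℕ → ℝ) :=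
    LinearMap.pi fun k => (LinearMap.proj 1).comp (leftAverage P ^ k)
  have orbit_one : orbit 1 = 1 := by
    have h : leftAverage P 1 = 1 := funext fun _ => P.apply_const 1
    ext k
    induction k with
    | zero => rfl
    | succ k ih => exact (congrFun (congrArg (leftAverage P ^ k) h) 1).trans ih
  refine ⟨⟨ν.toLinearMap.comp orbit, (congrArg ν orbit_one).trans (ν.apply_const 1),
    fun f C hC => ν.abs_apply_le fun k => abs_leftAverage_pow_le P hC k 1⟩, fun f ⟨C, hC⟩ => ?_⟩
  exact hν (orbit f) ⟨C, fun k => abs_leftAverage_pow_le P hC k 1⟩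

/-- The mean square increment of `q` along the right random walk started at `x`. -/
def energy (q : Λ → ℝ) (x : Λ) : ℝ := P fun s => (q (x * s) - q x) ^ 2

lemma abs_sq_sub_le {X : Type*} {q : X → ℝ} {C : ℝ} (hC : ∀ x, |q x| ≤ C) (x y : X) :
    |(q x - q y) ^ 2| ≤ (C + C) ^ 2 := by
  rw [abs_pow]
  gcongr
  exact (abs_sub _ _).trans (add_le_add (hC x) (hC y))

lemma rightAverage_sq {q : Λ → ℝ} (hq : rightAverage P q = q) :
    rightAverage P (q ^ 2) = q ^ 2 + energy P q := by
  ext x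
  have hexpand : (fun s => (q (x * s) - q x) ^ 2)
      = (fun s => (q ^ 2) (x * s)) - (2 * q x) • (fun s => q (x * s)) + fun _ => q x ^ 2 := by
    ext s
    simp only [Pi.add_apply, Pi.sub_apply, Pi.smul_apply, Pi.pow_apply, smul_eq_mul]
    ring
  rw [Pi.add_apply, energy, hexpand, map_add, map_sub, map_smul, Mean.apply_const,
    ← rightAverage_apply P q, hq, rightAverage_apply, Pi.pow_apply, smul_eq_mul]
  ring

end Markov

namespace IsSymmetricWalk

variable {P : Mean Λ} (hP : IsSymmetricWalk P) {q : Λ → ℝ}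
include hP

lemma rightAverage_leftAverage {f : Λ → ℝ} (hf : f ∈ boundedFunctions Λ) :
    rightAverage P (leftAverage P f) = leftAverage P (rightAverage P f) := by
  obtain ⟨C, hC⟩ := hf
  ext x
  simpa only [leftAverage_apply, rightAverage_apply, mul_assoc] using
    hP.apply_comm P (fun s t => f (s * (x * t))) C fun _ _ => hC _

lemma rightAverage_leftAverage_pow {f : Λ → ℝ} (hf : f ∈ boundedFunctions Λ) (k : ℕ) :
    rightAverage P ((leftAverage P ^ k) f) = (leftAverage P ^ k) (rightAverage P f) := by
  induction k with
  | zero => rfl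
  | succ k ih =>
    have hk : (leftAverage P ^ k) f ∈ boundedFunctions Λ :=
      hf.imp fun C hC => abs_leftAverage_pow_le P hC k
    rw [pow_succ', Module.End.mul_apply, Module.End.mul_apply, hP.rightAverage_leftAverage hk, ih]

lemma energy_le_leftAverage_energy (hq : q ∈ boundedFunctions Λ) (hL : leftAverage P q = q)
    (x : Λ) : energy P q x ≤ leftAverage P (energy P q) x := by
  obtain ⟨C, hC⟩ := hq
  have hbdd := abs_sq_sub_le hC
  have increment (s : Λ) : q (x * s) - q x = P fun t => q (t * x * s) - q (t * x) := by
    calc q (x * s) - q x = leftAverage P q (x * s) - leftAverage P q x := by rw [hL]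
      _ = P fun t => q (t * x * s) - q (t * x) := by
          rw [leftAverage_apply, leftAverage_apply, ← map_sub]
          simp only [mul_assoc]
          rfl
  calc energy P q x = P fun s => (P fun t => q (t * x * s) - q (t * x)) ^ 2 := by
        simp only [energy, increment]
    _ ≤ P fun s => P fun t => (q (t * x * s) - q (t * x)) ^ 2 :=
        P.mono ⟨(C + C) ^ 2, fun s => by
            simp only [← increment]; exact hbdd _ _⟩
          ⟨(C + C) ^ 2, fun s => P.abs_apply_le fun t => hbdd _ _⟩
          fun s => P.sq_apply_le ⟨C + C, fun t => (abs_sub _ _).trans (add_le_add (hC _) (hC _))⟩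
    _ = leftAverage P (energy P q) x :=
        (hP.apply_comm P _ ((C + C) ^ 2) fun s t => hbdd _ _).symm

-- The left and right walks started at `1` have the same law, so the second moment of `q` along
-- the walk grows by at least `energy P q 1` in each step, while it stays bounded.
lemma mul_energy_one_le (hq : q ∈ boundedFunctions Λ) (hL : leftAverage P q = q)
    (hR : rightAverage P q = q) (k : ℕ) : k * energy P q 1 ≤ (leftAverage P ^ k) (q ^ 2) 1 := by
  induction k with
  | zero => simpa using sq_nonneg (q 1)
  | succ k ih =>
    obtain ⟨C, hC⟩ := hq
    have hsq : q ^ 2 ∈ boundedFunctions Λ := ⟨C ^ 2, fun x => by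
      rw [Pi.pow_apply, abs_pow]
      exact pow_le_pow_left₀ (abs_nonneg _) (hC x) 2⟩
    have henergy : energy P q ∈ boundedFunctions Λ :=
      ⟨(C + C) ^ 2, fun x => P.abs_apply_le fun s => abs_sq_sub_le hC _ _⟩
    have hsame (f : Λ → ℝ) : leftAverage P f 1 = rightAverage P f 1 := by
      simp only [leftAverage_apply, rightAverage_apply, mul_one, one_mul]
    calc ((k + 1 : ℕ) : ℝ) * energy P q 1 = k * energy P q 1 + energy P q 1 := by push_cast; ring
      _ ≤ (leftAverage P ^ k) (q ^ 2) 1 + (leftAverage P ^ k) (energy P q) 1 :=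
          add_le_add ih (le_leftAverage_pow P henergy
            (hP.energy_le_leftAverage_energy ⟨C, hC⟩ hL) k 1)
      _ = (leftAverage P ^ (k + 1)) (q ^ 2) 1 := by
          rw [pow_succ' (leftAverage P), Module.End.mul_apply, hsame,
            hP.rightAverage_leftAverage_pow hsq, rightAverage_sq P hR, map_add, Pi.add_apply]

lemma eq_of_biharmonic (hq : q ∈ boundedFunctions Λ) (hL : leftAverage P q = q)
    (hR : rightAverage P q = q) (x : Λ) : q x = q 1 := by
  obtain ⟨C, hC⟩ := hq
  have henergy : energy P q 1 ≤ 0 := by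
    by_contra! hpos
    obtain ⟨k, hk⟩ := exists_nat_gt (C ^ 2 / energy P q 1)
    have hsq (x : Λ) : |(q ^ 2) x| ≤ C ^ 2 := by
      rw [Pi.pow_apply, abs_pow]
      exact pow_le_pow_left₀ (abs_nonneg _) (hC x) 2
    have hle := (hP.mul_energy_one_le ⟨C, hC⟩ hL hR k).trans
      (le_of_abs_le (abs_leftAverage_pow_le P hsq k 1))
    exact hle.not_gt ((div_lt_iff₀ hpos).1 hk)
  have hzero := hP.eq_zero_of_apply_le_zero _ ⟨(C + C) ^ 2, fun s => abs_sq_sub_le hC (1 * s) 1⟩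
    (fun s => sq_nonneg _) henergy x
  rw [sq_eq_zero_iff, one_mul] at hzero
  exact sub_eq_zero.1 hzero

/-- The double ergodicity of a stationary mean. -/
lemma apply_apply_translate_eq {m : Mean Λ}
    (hm : ∀ f ∈ boundedFunctions Λ, m (leftAverage P f) = m f)
    (hq : q ∈ boundedFunctions Λ) (γ : Λ) :
    m (fun x => m fun y => q (x⁻¹ * γ * y)) = m fun x => m fun y => q (x⁻¹ * y) := by
  obtain ⟨C, hC⟩ := hq
  let Q (g : Λ) : ℝ := m fun x => m fun y => q (x⁻¹ * g * y)
  have hinner (g x : Λ) : |m fun y => q (x⁻¹ * g * y)| ≤ C := m.abs_apply_le fun y => hC _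
  have hR : rightAverage P Q = Q := by
    ext g
    calc rightAverage P Q g = m fun x => P fun s => m fun y => q (x⁻¹ * (g * s) * y) :=
          (hP.apply_comm m _ C fun s x => hinner (g * s) x).symm
      _ = m fun x => m (leftAverage P fun y => q (x⁻¹ * g * y)) := congrArg m <| funext fun x => by
          rw [← hP.apply_comm m _ C fun s y => hC _]
          simp only [mul_assoc]
          rfl
      _ = Q g := congrArg m <| funext fun x => hm _ ⟨C, fun y => hC _⟩
  have hL : leftAverage P Q = Q := by
    ext g
    calc leftAverage P Q g = m fun x => P fun s => m fun y => q (x⁻¹ * (s * g) * y) :=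
          (hP.apply_comm m _ C fun s x => hinner (s * g) x).symm
      _ = m (leftAverage P fun x => m fun y => q (x⁻¹ * g * y)) := congrArg m <| funext fun x => by
          rw [leftAverage_apply, ← hP.apply_inv _ ⟨C, fun s => hinner g (s * x)⟩]
          simp only [mul_inv_rev, inv_inv, mul_assoc]
      _ = Q g := hm _ ⟨C, hinner g⟩
  simpa only [Q, mul_one] using hP.eq_of_biharmonic ⟨C, fun g => m.abs_apply_le (hinner g)⟩ hL hR γ

end IsSymmetricWalk

end RandomWalk

/-! ### Cochain maps and homotopies -/

/-- Homogeneous `n`-cochains on a set `S`: real functions of `n + 1` variables. -/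
abbrev Cochain (S : Type*) (n : ℕ) : Type _ := (Fin (n + 1) → S) → ℝ

section Coboundary

variable {S : Type*} {n : ℕ}

lemma gcob_apply (f : Cochain S n) (t : Fin (n + 2) → S) :
    gcob S n f t = ∑ i : Fin (n + 2), (-1 : ℝ) ^ (i : ℕ) * f (t ∘ i.succAbove) := rfl

lemma abs_gcob_le {f : Cochain S n} {C : ℝ} (hC : ∀ t, |f t| ≤ C) (t : Fin (n + 2) → S) :
    |gcob S n f t| ≤ (n + 2) * C := by
  have hsum : (n + 2) * C = ∑ _i : Fin (n + 2), C := by simp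
  rw [hsum, gcob_apply]
  refine (Finset.abs_sum_le_sum_abs _ _).trans (Finset.sum_le_sum fun i _ => ?_)
  rw [abs_mul, abs_pow, abs_neg, abs_one, one_pow, one_mul]
  exact hC _

lemma gcob_const (c : ℝ) : gcob S 0 (fun _ => c) = 0 := by
  ext t
  simp [gcob_apply, Fin.sum_univ_succ]

/-- Insertion of a first variable `x`, a contracting homotopy of the complex of all cochains. -/
def cone (x : S) (n : ℕ) : Cochain S (n + 1) →ₗ[ℝ] Cochain S n :=
  LinearMap.funLeft ℝ ℝ fun t => (Fin.cons x t : Fin (n + 2) → S)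

lemma cone_apply (x : S) (f : Cochain S (n + 1)) (t : Fin (n + 1) → S) :
    cone x n f t = f (Fin.cons x t) := rfl

lemma eq_zero_of_forall_cone {f : Cochain S (n + 1)} (h : ∀ x, cone x n f = 0) : f = 0 := by
  ext t
  rw [← Fin.cons_self_tail t]
  exact congrFun (h (t 0)) (Fin.tail t)

lemma cons_comp_succAbove_zero (x : S) (t : Fin n → S) :
    (Fin.cons x t : Fin (n + 1) → S) ∘ (0 : Fin (n + 1)).succAbove = t := by
  ext
  simp

lemma cons_comp_succAbove_succ (x : S) (t : Fin (n + 1) → S) (i : Fin (n + 1)) :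
    (Fin.cons x t : Fin (n + 2) → S) ∘ i.succ.succAbove = Fin.cons x (t ∘ i.succAbove) := by
  ext j
  cases j using Fin.cases <;> simp

lemma cone_gcob (x : S) (f : Cochain S (n + 1)) :
    cone x (n + 1) (gcob S (n + 1) f) = f - gcob S n (cone x n f) := by
  ext t
  rw [cone_apply, gcob_apply, Fin.sum_univ_succ, cons_comp_succAbove_zero, Pi.sub_apply,
    gcob_apply, sub_eq_add_neg, ← Finset.sum_neg_distrib]
  simp only [cons_comp_succAbove_succ, cone_apply, Fin.val_succ, pow_succ, Fin.val_zero, pow_zero,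
    one_mul, mul_neg_one, neg_mul]

lemma cone_gcob_zero (x : S) (f : Cochain S 0) :
    cone x 0 (gcob S 0 f) = f - fun _ => f fun _ => x := by
  ext t
  have hone : (Fin.cons x t : Fin 2 → S) ∘ (Fin.succ (0 : Fin 1)).succAbove = fun _ => x := by
    ext j; fin_cases j; simp
  rw [cone_apply, gcob_apply, Fin.sum_univ_succ, cons_comp_succAbove_zero, Fin.sum_univ_one, hone]
  simp [sub_eq_add_neg]

lemma gcob_gcob (f : Cochain S n) : gcob S (n + 1) (gcob S n f) = 0 := by
  induction n with
  | zero =>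
    exact eq_zero_of_forall_cone fun x => by
      rw [cone_gcob, cone_gcob_zero, map_sub, gcob_const, sub_zero, sub_self]
  | succ n ih =>
    exact eq_zero_of_forall_cone fun x => by
      rw [cone_gcob, cone_gcob, map_sub, ih, sub_zero, sub_self]

end Coboundary

/-- Norm non-increasing, equivariant morphisms of augmented complexes between the cochains on two
`Λ`-sets. Like means, they are defined on all cochains but controlled on bounded ones only. -/
structure CochainMap (Λ : Type*) [Group Λ] (S X : Type*) [MulAction Λ S] [MulAction Λ X] where
  app : ∀ n, Cochain S n →ₗ[ℝ] Cochain X n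
  gcob_app : ∀ n f, gcob X n (app n f) = app (n + 1) (gcob S n f)
  app_const : ∀ c : ℝ, app 0 (fun _ => c) = fun _ => c
  abs_app_le : ∀ {n f} {C : ℝ}, (∀ s, |f s| ≤ C) → ∀ t, |app n f t| ≤ C
  app_smul : ∀ {n f}, f ∈ boundedFunctions (Fin (n + 1) → S) → ∀ (γ : Λ) (t : Fin (n + 1) → X),
    app n f (γ • t) = app n (fun s => f (γ • s)) t

namespace CochainMap

variable {Λ : Type*} [Group Λ] {S X Y : Type*} [MulAction Λ S] [MulAction Λ X] [MulAction Λ Y]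

/-- The identity cochain map. -/
def id (Λ : Type*) [Group Λ] (S : Type*) [MulAction Λ S] : CochainMap Λ S S where
  app _ := LinearMap.id
  gcob_app _ _ := rfl
  app_const _ := rfl
  abs_app_le hC := hC
  app_smul _ _ _ := rfl

/-- Composition of cochain maps. -/
def comp (B : CochainMap Λ X Y) (A : CochainMap Λ S X) : CochainMap Λ S Y where
  app n := (B.app n).comp (A.app n)
  gcob_app n f := by simp only [LinearMap.comp_apply, B.gcob_app, A.gcob_app]
  app_const c := by simp only [LinearMap.comp_apply, B.app_const, A.app_const]
  abs_app_le hC := B.abs_app_le (A.abs_app_le hC)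
  app_smul {n f} hf γ t := by
    have hA : A.app n f ∈ boundedFunctions (Fin (n + 1) → X) := hf.imp fun _ hC => A.abs_app_le hC
    have htranslate : (fun s => A.app n f (γ • s)) = A.app n fun s => f (γ • s) :=
      funext (A.app_smul hf γ)
    rw [LinearMap.comp_apply, B.app_smul hA, htranslate, LinearMap.comp_apply]

/-- Pull-back of cochains along an equivariant map. -/
def pullback (p : X →[Λ] S) : CochainMap Λ S X where
  app _ := LinearMap.funLeft ℝ ℝ fun t i => p (t i)
  gcob_app _ _ := rfl
  app_const _ := rfl
  abs_app_le hC _ := hC _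
  app_smul {_ f} _ γ t := congrArg f (funext fun i => p.map_smul γ (t i))

lemma app_mem_invF (A : CochainMap Λ S X) {n : ℕ} {f : Cochain S n}
    (hf : f ∈ boundedFunctions (Fin (n + 1) → S)) (hinv : f ∈ invF Λ S n) :
    A.app n f ∈ invF Λ X n := fun γ t =>
  (A.app_smul hf γ t).trans (congrArg (A.app n · t) (funext (hinv γ)))

section Homotopy

variable (A B : CochainMap Λ S Λ) (s₀ : S)

/-- A homotopy between two cochain maps into the free resolution, built by coning off at the
orbit point of the first variable. -/
def homotopy : ∀ n, Cochain S (n + 1) →ₗ[ℝ] Cochain Λ n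
  | 0 => LinearMap.pi fun g => (LinearMap.proj g).comp
      ((A.app 0 - B.app 0).comp (cone (g 0 • s₀) 0))
  | n + 1 => LinearMap.pi fun g => (LinearMap.proj g).comp
      ((A.app (n + 1) - B.app (n + 1) - (gcob Λ n).comp (homotopy n)).comp
        (cone (g 0 • s₀) (n + 1)))

lemma homotopy_zero_apply (f : Cochain S 1) (g : Fin 1 → Λ) :
    A.homotopy B s₀ 0 f g = (A.app 0 - B.app 0) (cone (g 0 • s₀) 0 f) g := rfl

lemma homotopy_succ_apply {n : ℕ} (f : Cochain S (n + 2)) (g : Fin (n + 2) → Λ) :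
    A.homotopy B s₀ (n + 1) f g = (A.app (n + 1) - B.app (n + 1)) (cone (g 0 • s₀) (n + 1) f) g
      - gcob Λ n (A.homotopy B s₀ n (cone (g 0 • s₀) (n + 1) f)) g := rfl

lemma homotopy_gcob_zero (f : Cochain S 0) :
    A.homotopy B s₀ 0 (gcob S 0 f) = (A.app 0 - B.app 0) f := by
  have hconst (c : ℝ) : (A.app 0 - B.app 0) (fun _ => c) = 0 := by
    rw [LinearMap.sub_apply, A.app_const, B.app_const, sub_self]
  ext g
  rw [homotopy_zero_apply, cone_gcob_zero, map_sub, hconst, sub_zero]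

lemma homotopy_gcob {n : ℕ} (f : Cochain S (n + 1)) :
    A.homotopy B s₀ (n + 1) (gcob S (n + 1) f)
      = (A.app (n + 1) - B.app (n + 1)) f - gcob Λ n (A.homotopy B s₀ n f) := by
  have gcob_sub (n : ℕ) (f : Cochain S n) : gcob Λ n ((A.app n - B.app n) f)
      = (A.app (n + 1) - B.app (n + 1)) (gcob S n f) := by
    simp only [LinearMap.sub_apply, map_sub, A.gcob_app, B.gcob_app]
  induction n with
  | zero =>
    ext g
    rw [homotopy_succ_apply, cone_gcob, map_sub, map_sub, map_sub, homotopy_gcob_zero, gcob_sub]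
    simp only [Pi.sub_apply]
    ring
  | succ n ih =>
    ext g
    rw [homotopy_succ_apply, cone_gcob, map_sub, map_sub, map_sub, ih, map_sub, gcob_gcob,
      gcob_sub]
    simp only [Pi.sub_apply, Pi.zero_apply]
    ring

lemma abs_sub_app_le {n : ℕ} {f : Cochain S n} {C : ℝ} (hC : ∀ s, |f s| ≤ C)
    (g : Fin (n + 1) → Λ) : |(A.app n - B.app n) f g| ≤ C + C :=
  (abs_sub _ _).trans (add_le_add (A.abs_app_le hC g) (B.abs_app_le hC g))

lemma exists_abs_homotopy_le (n : ℕ) (C : ℝ) :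
    ∃ D : ℝ, ∀ f, (∀ s, |f s| ≤ C) → ∀ g, |A.homotopy B s₀ n f g| ≤ D := by
  induction n with
  | zero => exact ⟨C + C, fun f hC g => A.abs_sub_app_le B (fun _ => hC _) g⟩
  | succ n ih =>
    obtain ⟨D, hD⟩ := ih
    exact ⟨C + C + (n + 2) * D, fun f hC g => (abs_sub _ _).trans <|
      add_le_add (A.abs_sub_app_le B (fun _ => hC _) g) (abs_gcob_le (hD _ fun _ => hC _) g)⟩

lemma cone_smul {n : ℕ} (f : Cochain S (n + 1)) (γ : Λ) (x : S) :
    (fun t => cone (γ • x) n f (γ • t)) = cone x n fun t => f (γ • t) := by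
  ext t
  refine congrArg f (funext fun i => ?_)
  cases i using Fin.cases <;> rfl

lemma sub_app_smul {n : ℕ} {f : Cochain S n} (hf : f ∈ boundedFunctions (Fin (n + 1) → S)) (γ : Λ)
    (g : Fin (n + 1) → Λ) :
    (A.app n - B.app n) f (γ • g) = (A.app n - B.app n) (fun s => f (γ • s)) g :=
  congrArg₂ (· - ·) (A.app_smul hf γ g) (B.app_smul hf γ g)

lemma homotopy_smul {n : ℕ} {f : Cochain S (n + 1)}
    (hf : f ∈ boundedFunctions (Fin (n + 2) → S)) (γ : Λ) (g : Fin (n + 1) → Λ) :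
    A.homotopy B s₀ n f (γ • g) = A.homotopy B s₀ n (fun s => f (γ • s)) g := by
  have cone_bdd {k : ℕ} {f : Cochain S (k + 1)} (hf : f ∈ boundedFunctions (Fin (k + 2) → S))
      (x : S) : cone x k f ∈ boundedFunctions (Fin (k + 1) → S) := comp_mem_boundedFunctions hf _
  induction n with
  | zero =>
    rw [homotopy_zero_apply, homotopy_zero_apply, A.sub_app_smul B (cone_bdd hf _), Pi.smul_apply,
      smul_eq_mul, mul_smul, cone_smul]
  | succ n ih =>
    rw [homotopy_succ_apply, homotopy_succ_apply, A.sub_app_smul B (cone_bdd hf _), Pi.smul_apply,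
      smul_eq_mul, mul_smul, cone_smul]
    rw [gcob_apply, gcob_apply]
    refine congrArg _ (Finset.sum_congr rfl fun i _ => congrArg _ ?_)
    exact (ih (cone_bdd hf _) (g ∘ i.succAbove)).trans (by rw [cone_smul])

lemma app_sub_app_mem_grpB [hS : Nonempty S] {n : ℕ} {f : Cochain S (n + 1)}
    (hf : f ∈ boundedFunctions (Fin (n + 2) → S)) (hinv : f ∈ invF Λ S (n + 1))
    (hcocycle : gcob S (n + 1) f = 0) :
    A.app (n + 1) f - B.app (n + 1) f ∈ grpB Λ (n + 1) := by
  obtain ⟨s₀⟩ := hS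
  refine ⟨A.homotopy B s₀ n f, ⟨?_, fun γ g => ?_⟩, ?_⟩
  · obtain ⟨C, hC⟩ := hf
    exact (A.exists_abs_homotopy_le B s₀ n C).imp fun D hD => hD f hC
  · exact (A.homotopy_smul B s₀ hf γ g).trans
      (congrArg (A.homotopy B s₀ n · g) (funext (hinv γ)))
  · have h := A.homotopy_gcob B s₀ f
    rw [hcocycle, map_zero, eq_comm, sub_eq_zero] at h
    exact h.symm

end Homotopy

end CochainMap

/-! ### Cochain maps given by averaging -/

namespace Mean

variable {X : Type*}

/-- The iterated mean `f ↦ m₀(x₀ ↦ m₁(x₁ ↦ ⋯ f(x₀, …, xₙ₋₁)))` of a finite sequence of means. -/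
def pi : ∀ {n : ℕ}, (Fin n → Mean X) → Mean (Fin n → X)
  | 0, _ => dirac Fin.elim0
  | _ + 1, ms => (ms 0).bind fun x => (pi (Fin.tail ms)).map fun t => Fin.cons x t

lemma pi_succ {n : ℕ} (ms : Fin (n + 1) → Mean X) (f : (Fin (n + 1) → X) → ℝ) :
    pi ms f = ms 0 fun x => pi (Fin.tail ms) fun t => f (Fin.cons x t) := rfl

lemma pi_comp_succAbove {n : ℕ} (ms : Fin (n + 1) → Mean X) (f : (Fin n → X) → ℝ)
    (i : Fin (n + 1)) : pi ms (fun t => f (t ∘ i.succAbove)) = pi (ms ∘ i.succAbove) f := by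
  have hzero (n : ℕ) (ms : Fin (n + 1) → Mean X) (f : (Fin n → X) → ℝ) :
      pi ms (fun t => f (t ∘ (0 : Fin (n + 1)).succAbove)) = pi (Fin.tail ms) f := by
    simp only [pi_succ, cons_comp_succAbove_zero, apply_const]
  induction n with
  | zero =>
    obtain rfl := Fin.fin_one_eq_zero i
    exact hzero 0 ms f
  | succ n ih =>
    cases i using Fin.cases with
    | zero => exact hzero (n + 1) ms f
    | succ j =>
      have htail : Fin.tail (ms ∘ j.succ.succAbove) = Fin.tail ms ∘ j.succAbove := by
        ext k : 1
        simp [Fin.tail]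
      rw [pi_succ, pi_succ, htail, Function.comp_apply, Fin.succ_succAbove_zero]
      refine congrArg _ (funext fun x => ?_)
      simp only [cons_comp_succAbove_succ]
      exact ih (Fin.tail ms) (fun t => f (Fin.cons x t)) j

lemma pi_smul {Λ S : Type*} [Group Λ] [MulAction Λ S] [MulAction Λ X] {M : S → Mean X}
    (hM : ∀ (γ : Λ) s, ∀ f ∈ boundedFunctions X, M (γ • s) f = M s fun x => f (γ • x))
    {n : ℕ} {f : (Fin n → X) → ℝ} (hf : f ∈ boundedFunctions (Fin n → X)) (γ : Λ)
    (s : Fin n → S) : pi (M ∘ (γ • s)) f = pi (M ∘ s) fun t => f (γ • t) := by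
  induction n with
  | zero => exact congrArg f (Subsingleton.elim _ _)
  | succ n ih =>
    obtain ⟨C, hC⟩ := hf
    have hbdd : (fun x => pi (M ∘ (γ • Fin.tail s)) fun t => f (Fin.cons x t))
        ∈ boundedFunctions X := ⟨C, fun x => abs_apply_le _ fun t => hC _⟩
    refine (hM γ (s 0) _ hbdd).trans (congrArg _ (funext fun x => ?_))
    refine (ih ⟨C, fun t => hC _⟩ (Fin.tail s)).trans (congrArg _ (funext fun t => congrArg f ?_))
    ext i
    cases i using Fin.cases <;> rfl

end Mean

lemma gcob_eq_sum {S : Type*} {n : ℕ} (f : Cochain S n) :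
    gcob S n f = ∑ i : Fin (n + 2), (-1 : ℝ) ^ (i : ℕ) • fun t => f (t ∘ i.succAbove) := by
  ext t
  simp only [gcob_apply, Finset.sum_apply, Pi.smul_apply, smul_eq_mul]

/-- The cochain map given by averaging a cochain on `X`, in each variable, with respect to an
equivariant family of means on `X` indexed by `S`. -/
def CochainMap.ofMeans {Λ S X : Type*} [Group Λ] [MulAction Λ S] [MulAction Λ X] (M : S → Mean X)
    (hM : ∀ (γ : Λ) s, ∀ f ∈ boundedFunctions X, M (γ • s) f = M s fun x => f (γ • x)) :
    CochainMap Λ X S where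
  app _ := LinearMap.pi fun s => (Mean.pi (M ∘ s)).toLinearMap
  gcob_app n f := by
    ext s
    change _ = Mean.pi (M ∘ s) (gcob X n f)
    rw [gcob_eq_sum f, map_sum, gcob_apply]
    refine Finset.sum_congr rfl fun i _ => ?_
    rw [map_smul, Mean.pi_comp_succAbove, smul_eq_mul]
    rfl
  app_const c := funext fun s => (Mean.pi (M ∘ s)).apply_const c
  abs_app_le hC s := (Mean.pi (M ∘ s)).abs_apply_le hC
  app_smul hf γ s := Mean.pi_smul hM hf γ s

section Alternation

variable {S : Type*} {n : ℕ}

/-- The sum of the permutations of a cochain, weighted by their signs. -/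
def signedSum (S : Type*) (n : ℕ) : Cochain S n →ₗ[ℝ] Cochain S n :=
  ∑ π : Equiv.Perm (Fin (n + 1)),
    ((Equiv.Perm.sign π : ℤ) : ℝ) • LinearMap.funLeft ℝ ℝ fun t => t ∘ π

lemma signedSum_apply (f : Cochain S n) (t : Fin (n + 1) → S) :
    signedSum S n f t
      = ∑ π : Equiv.Perm (Fin (n + 1)), ((Equiv.Perm.sign π : ℤ) : ℝ) * f (t ∘ π) := by
  simp [signedSum, LinearMap.funLeft_apply]

lemma signedSum_eq_zero_of_not_injective (f : Cochain S n) {t : Fin (n + 1) → S}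
    (ht : ¬ Function.Injective t) : signedSum S n f t = 0 := by
  obtain ⟨a, b, hab, hne⟩ := Function.not_injective_iff.1 ht
  have hswap : t ∘ Equiv.swap a b = t := by
    rw [Equiv.comp_swap_eq_update, hab, Function.update_eq_self, ← hab, Function.update_eq_self]
  rw [signedSum_apply]
  refine Finset.sum_involution (fun π _ => Equiv.swap a b * π) (fun π _ => ?_) (fun π _ _ h => ?_)
    (fun _ _ => Finset.mem_univ _) fun π _ => Equiv.swap_mul_self_mul a b π
  · rw [Equiv.Perm.coe_mul, ← Function.comp_assoc, hswap, Equiv.Perm.sign_mul,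
      Equiv.Perm.sign_swap hne]
    push_cast
    ring
  · exact hne (Equiv.swap_eq_one_iff.1 (mul_eq_right.1 h))

lemma signedSum_comp_succAbove (f : Cochain S n) (j : Fin (n + 2)) (t : Fin (n + 2) → S) :
    signedSum S (n + 1) (fun s => f (s ∘ j.succAbove)) t
      = (-1) ^ (j : ℕ) * signedSum S (n + 1) (fun s => f (s ∘ Fin.succ)) t := by
  rw [signedSum_apply, signedSum_apply, ← Equiv.sum_comp (Equiv.mulRight (Fin.cycleRange j)),
    Finset.mul_sum]
  refine Finset.sum_congr rfl fun σ _ => ?_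
  have hface : (t ∘ (σ * Fin.cycleRange j : Equiv.Perm (Fin (n + 2)))) ∘ j.succAbove
      = (t ∘ σ) ∘ Fin.succ := by
    ext x
    simp [Fin.cycleRange_succAbove]
  rw [Equiv.coe_mulRight, hface, Equiv.Perm.sign_mul, Fin.sign_cycleRange]
  push_cast
  ring

/-- A permutation of `Fin (n + 2)` is determined by the image of `0` and the induced bijection
between the complements of `0` and of that image. -/
def permSuccAbove (p : Fin (n + 2) × Equiv.Perm (Fin (n + 1))) : Equiv.Perm (Fin (n + 2)) :=
  (Fin.cycleRange p.1)⁻¹ * Equiv.Perm.decomposeFin.symm (0, p.2)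

lemma permSuccAbove_zero (p : Fin (n + 2) × Equiv.Perm (Fin (n + 1))) :
    permSuccAbove p 0 = p.1 := by
  change (Fin.cycleRange p.1).symm (Equiv.Perm.decomposeFin.symm (0, p.2) 0) = _
  simp

lemma permSuccAbove_succ (p : Fin (n + 2) × Equiv.Perm (Fin (n + 1))) (x : Fin (n + 1)) :
    permSuccAbove p x.succ = p.1.succAbove (p.2 x) := by
  change (Fin.cycleRange p.1).symm (Equiv.Perm.decomposeFin.symm (0, p.2) x.succ) = _
  simp

lemma sign_permSuccAbove (p : Fin (n + 2) × Equiv.Perm (Fin (n + 1))) :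
    Equiv.Perm.sign (permSuccAbove p) = (-1) ^ (p.1 : ℕ) * Equiv.Perm.sign p.2 := by
  simp [permSuccAbove, Equiv.Perm.sign_mul, Fin.sign_cycleRange]

lemma permSuccAbove_bijective : Function.Bijective (permSuccAbove (n := n)) := by
  rw [Fintype.bijective_iff_injective_and_card]
  refine ⟨fun ⟨i, π⟩ ⟨j, τ⟩ h => ?_, by simp [Fintype.card_perm, Nat.factorial_succ]⟩
  obtain rfl : i = j := by simpa only [permSuccAbove_zero] using congrArg (· 0) h
  refine congrArg _ (Equiv.ext fun x => i.succAbove_right_injective ?_)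
  rw [← permSuccAbove_succ (i, π), h, permSuccAbove_succ]

lemma gcob_signedSum_apply (f : Cochain S n) (t : Fin (n + 2) → S) :
    gcob S n (signedSum S n f) t = signedSum S (n + 1) (fun s => f (s ∘ Fin.succ)) t := by
  simp only [gcob_apply, signedSum_apply, Finset.mul_sum]
  rw [← Fintype.sum_prod_type']
  refine Fintype.sum_bijective permSuccAbove permSuccAbove_bijective _ _ fun p => ?_
  have hface : (t ∘ permSuccAbove p) ∘ Fin.succ = (t ∘ p.1.succAbove) ∘ p.2 := by
    ext x
    simp [permSuccAbove_succ]
  rw [hface, sign_permSuccAbove]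
  push_cast
  ring

lemma signedSum_gcob (f : Cochain S n) :
    signedSum S (n + 1) (gcob S n f) = ((n + 2 : ℕ) : ℝ) • gcob S n (signedSum S n f) := by
  have hsign (i : ℕ) : ((-1 : ℝ) ^ i) * (-1) ^ i = 1 := by rw [← mul_pow]; simp
  ext t
  simp only [gcob_eq_sum f, map_sum, map_smul, Finset.sum_apply, Pi.smul_apply, smul_eq_mul,
    signedSum_comp_succAbove, gcob_signedSum_apply, ← mul_assoc, hsign]
  simp

/-- Alternation of cochains. -/
def CochainMap.alternation (Λ S : Type*) [Group Λ] [MulAction Λ S] : CochainMap Λ S S where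
  app n := ((n + 1).factorial : ℝ)⁻¹ • signedSum S n
  gcob_app n f := by
    have hn : ((n + 2 : ℕ) : ℝ) ≠ 0 := by positivity
    rw [LinearMap.smul_apply, LinearMap.smul_apply, map_smul, signedSum_gcob, smul_smul,
      Nat.factorial_succ (n + 1), Nat.cast_mul, mul_inv_rev, inv_mul_cancel_right₀ hn]
  app_const c := by
    ext t
    simp [signedSum_apply]
  abs_app_le {n f C} hC t := by
    have hpos : (0 : ℝ) < (n + 1).factorial := by positivity
    have hsum : ((n + 1).factorial : ℝ) * C = ∑ _π : Equiv.Perm (Fin (n + 1)), C := by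
      simp [Fintype.card_perm]
    rw [LinearMap.smul_apply, Pi.smul_apply, smul_eq_mul, abs_mul, abs_inv, abs_of_pos hpos,
      inv_mul_le_iff₀ hpos, signedSum_apply, hsum]
    refine (Finset.abs_sum_le_sum_abs _ _).trans (Finset.sum_le_sum fun π _ => ?_)
    rw [abs_mul, ← Int.cast_abs, Int.isUnit_iff_abs_eq.1 (Equiv.Perm.sign π).isUnit, Int.cast_one,
      one_mul]
    exact hC _
  app_smul _ γ t := by
    simp only [LinearMap.smul_apply, Pi.smul_apply, signedSum_apply]
    rfl

lemma CochainMap.alternation_app_eq_zero_of_not_injective (Λ : Type*) [Group Λ] [MulAction Λ S]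
    (f : Cochain S n) {t : Fin (n + 1) → S} (ht : ¬ Function.Injective t) :
    (alternation Λ S).app n f t = 0 := by
  rw [alternation, LinearMap.smul_apply, Pi.smul_apply, signedSum_eq_zero_of_not_injective f ht,
    smul_zero]

lemma CochainMap.alternation_app_one_const (Λ : Type*) [Group Λ] [MulAction Λ S] (c : ℝ) :
    (alternation Λ S).app 1 (fun _ => c) = 0 := by
  ext t
  have hdiag : (alternation Λ S).app 1 (fun _ => c) t
      = (alternation Λ S).app 1 (fun _ => c) fun _ => t 0 := rfl
  rw [hdiag]
  exact alternation_app_eq_zero_of_not_injective Λ _ fun h => by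
    simpa using h (a₁ := 0) (a₂ := 1) rfl

end Alternation

/-- The cochain maps used to transfer bounded cochains of a group `Λ` to a `Λ`-set. The vanishing on
all of `grpC Λ 1` makes coboundaries of 1-cochains disappear, which is what makes the combination
theorem below well defined in degree two. -/
structure CochainMap.IsTransfer {Λ S : Type*} [Group Λ] [MulAction Λ S]
    (A : CochainMap Λ Λ S) : Prop where
  eq_zero_of_not_injective : ∀ {n} (f : Cochain Λ n) {t : Fin (n + 1) → S},
    ¬ Function.Injective t → A.app n f t = 0
  app_one_eq_zero : ∀ {u : Cochain Λ 1}, u ∈ grpC Λ 1 → A.app 1 u = 0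

/-- The right translates of a mean `m` on a group form an equivariant family of means. -/
def CochainMap.ofMean {Λ : Type*} [Group Λ] (m : Mean Λ) : CochainMap Λ Λ Λ :=
  .ofMeans (fun γ => m.map (γ * ·)) fun γ s f _ => by
    simp only [Mean.map_apply, smul_eq_mul, mul_assoc]

lemma CochainMap.exists_ofMean_app_one_eq_const (Λ : Type*) [Group Λ] [Countable Λ] :
    ∃ m : Mean Λ, ∀ u ∈ grpC Λ 1, ∃ c : ℝ, (ofMean m).app 1 u = fun _ => c := by
  obtain ⟨P, hP⟩ := exists_isSymmetricWalk Λ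
  obtain ⟨m, hm⟩ := exists_leftAverage_stationary P
  refine ⟨m, fun u hu => ?_⟩
  let q (x : Λ) : ℝ := u ![1, x]
  have hq : q ∈ boundedFunctions Λ := comp_mem_boundedFunctions hu.1 _
  have hu_eq (g x h y : Λ) : u ![g * x, h * y] = q (x⁻¹ * (g⁻¹ * h) * y) := by
    refine Eq.trans ?_ (hu.2 (g * x) _)
    congr 1
    ext i
    fin_cases i <;> simp [mul_assoc]
  refine ⟨m fun x => m fun y => q (x⁻¹ * y), funext fun g => ?_⟩
  calc (ofMean m).app 1 u g = m fun x => m fun y => u ![g 0 * x, g 1 * y] := by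
        refine congrArg m (funext fun x => congrArg m (funext fun y => congrArg u ?_))
        ext i
        fin_cases i <;> rfl
    _ = m fun x => m fun y => q (x⁻¹ * y) := by
        simp only [hu_eq]
        exact hP.apply_apply_translate_eq hm hq _

lemma CochainMap.exists_isTransfer {Λ S : Type*} [Group Λ] [Countable Λ] [MulAction Λ S]
    (M : S → Mean Λ)
    (hM : ∀ (γ : Λ) s, ∀ f ∈ boundedFunctions Λ, M (γ • s) f = M s fun x => f (γ • x)) :
    ∃ A : CochainMap Λ Λ S, A.IsTransfer := by
  obtain ⟨m, hm⟩ := exists_ofMean_app_one_eq_const Λ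
  refine ⟨(alternation Λ S).comp ((ofMeans M hM).comp (ofMean m)),
    fun _ _ ht => alternation_app_eq_zero_of_not_injective Λ _ ht, fun {u} hu => ?_⟩
  obtain ⟨c, hc⟩ := hm u hu
  have hconst : (ofMeans M hM).app 1 (fun _ => c) = fun _ => c :=
    funext fun s => (Mean.pi (M ∘ s)).apply_const c
  change (alternation Λ S).app 1 ((ofMeans M hM).app 1 ((ofMean m).app 1 u)) = 0
  rw [hc, hconst, alternation_app_one_const]

lemma exists_equivariant_means {Λ K : Type*} [Group Λ] {H : K → Subgroup Λ}
    (hH : ∀ k, IsAmenable (H k)) :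
    ∃ M : (Σ k, Λ ⧸ H k) → Mean Λ, ∀ (γ : Λ) s, ∀ f ∈ boundedFunctions Λ,
      M (γ • s) f = M s fun x => f (γ • x) := by
  choose μ hμ using fun k => (hH k).exists_mean
  refine ⟨fun s => (μ s.1).map fun x => s.2.out * x, fun γ ⟨k, q⟩ f hf => ?_⟩
  have hout : (γ * q.out)⁻¹ * (γ • q).out ∈ H k := by
    rw [← QuotientGroup.eq, QuotientGroup.out_eq']
    conv_rhs => rw [← QuotientGroup.out_eq' q]
    rfl
  have h := hμ k (fun x => f (γ * q.out * x)) (comp_mem_boundedFunctions hf _) ⟨_, hout⟩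
  simp only [mul_inv_rev, mul_assoc, mul_inv_cancel_left, Subgroup.coe_mul] at h
  simp only [Mean.map_apply, smul_eq_mul]
  exact h

/-! ### Gluing bijections along edge groups -/

section Chart

open Cardinal

lemma exists_equiv_prod_bool {κ M : Type} {B : Set M} (hB : #B = #κ) (hBc : #(Bᶜ : Set M) = #κ) :
    ∃ β : κ × Bool ≃ M, ∀ i b, β (i, b) ∈ B ↔ b = true := by
  classical
  obtain ⟨inside⟩ := Cardinal.eq.1 hB
  obtain ⟨outside⟩ := Cardinal.eq.1 hBc
  let β : κ × Bool ≃ M :=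
    ((Equiv.prodComm κ Bool).trans (Equiv.boolProdEquivSum κ)).trans
      ((Equiv.sumCongr outside.symm inside.symm).trans
        ((Equiv.sumComm _ _).trans (Equiv.Set.sumCompl B)))
  refine ⟨β, fun i b => ?_⟩
  cases b
  · exact iff_of_false (outside.symm i).2 Bool.false_ne_true
  · exact iff_of_true (inside.symm i).2 rfl

variable {Λ Q K κ : Type} [Group Λ] [Group Q]

lemma exists_equiv_prod_of_injective {h : Q →* Λ} (hh : Function.Injective h) :
    ∃ (T : Set Λ) (φ : Q × T ≃ Λ) (τ : T), (∀ x t, φ (x, t) = h x * t) ∧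
      ∀ x t, φ (x, t) ∈ h.range ↔ t = τ := by
  obtain ⟨T, hT, h1⟩ := h.range.exists_isComplement_right 1
  let φ : Q × T ≃ Λ :=
    (Equiv.prodCongr (MonoidHom.ofInjective hh).toEquiv (Equiv.refl T)).trans
      (Equiv.ofBijective _ hT)
  have hφ : ∀ x t, φ (x, t) = h x * t := fun x t => rfl
  refine ⟨T, φ, ⟨1, h1⟩, hφ, fun x t => ?_⟩
  rw [hφ, Subgroup.mul_mem_cancel_left _ (MonoidHom.mem_range.2 ⟨x, rfl⟩)]
  refine ⟨?_, fun ht => ht ▸ one_mem _⟩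
  rintro ⟨y, hy⟩
  have key : φ (1, t) = φ (y, ⟨1, h1⟩) := by simp only [hφ, map_one, one_mul, hy, mul_one]
  exact congrArg Prod.snd (φ.injective key)

lemma exists_equivariant_chart {h : Q →* Λ} (hh : Function.Injective h) {k₀ k₁ : K} (hk : k₁ ≠ k₀)
    (hκ : #(Λ × K × κ) = #κ) :
    ∃ Ω : Q × κ × Bool ≃ Λ × K × κ,
      (∀ x y c, Ω (x * y, c) = (h x * (Ω (y, c)).1, (Ω (y, c)).2)) ∧
      ∀ x i b, (Ω (x, i, b)).2.1 = k₀ ∧ (Ω (x, i, b)).1 ∈ h.range ↔ b = true := by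
  obtain ⟨T, φ, τ, hφ, hτ⟩ := exists_equiv_prod_of_injective hh
  let B : Set (T × K × κ) := {m | m.2.1 = k₀ ∧ m.1 = τ}
  have card_eq : ∀ (A : Set (T × K × κ)) (k : K), (∀ i, (τ, k, i) ∈ A) → #A = #κ := by
    refine fun A k hA => le_antisymm ?_ (mk_le_of_injective (f := fun i => ⟨_, hA i⟩) ?_)
    · refine (mk_set_le A).trans (le_of_le_of_eq ?_ hκ)
      exact mk_le_of_injective (Subtype.val_injective.prodMap Function.injective_id)
    · intro i j hij
      simpa using hij
  obtain ⟨β, hβ⟩ := exists_equiv_prod_bool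
    (card_eq B k₀ fun i => ⟨rfl, rfl⟩) (card_eq Bᶜ k₁ fun i hi => hk hi.1)
  let Ω : Q × κ × Bool ≃ Λ × K × κ :=
    ((Equiv.prodCongr (Equiv.refl Q) β).trans (Equiv.prodAssoc Q T (K × κ)).symm).trans
      (Equiv.prodCongr φ (Equiv.refl _))
  have hΩ : ∀ x c, Ω (x, c) = (φ (x, (β c).1), (β c).2) := fun x c => rfl
  refine ⟨Ω, fun x y c => ?_, fun x i b => ?_⟩
  · simp only [hΩ, hφ, map_mul, mul_assoc]
  · simp only [hΩ, hτ]
    exact hβ i b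

end Chart

/-! ### Walks in spanning trees -/

section Tree

variable {G : SerreGraph}

namespace SerreGraph

lemma isWalk_append {p q : List G.E} {v w : G.V} :
    G.IsWalk (p ++ q) v w ↔ ∃ u, G.IsWalk p v u ∧ G.IsWalk q u w := by
  induction p generalizing v with
  | nil => simp [SerreGraph.IsWalk]
  | cons e p ih => simp only [List.cons_append, SerreGraph.IsWalk, ih, and_assoc, exists_and_left]

lemma IsWalk.reverse {p : List G.E} {v w : G.V} (h : G.IsWalk p v w) :
    G.IsWalk (p.map G.bar).reverse w v := by
  induction p generalizing v with
  | nil => exact h.symm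
  | cons e p ih =>
    rw [List.map_cons, List.reverse_cons, isWalk_append]
    exact ⟨G.t e, ih h.2, by rw [SerreGraph.o, G.bar_bar], h.1⟩

lemma exists_backtrack {p : List G.E} (hp : ¬ G.Reduced p) :
    ∃ p₁ e p₂, p = p₁ ++ e :: G.bar e :: p₂ := by
  rw [Reduced, List.Chain', List.isChain_iff_forall_rel_of_append_cons_cons] at hp
  push Not at hp
  obtain ⟨e, _, p₁, p₂, rfl, rfl⟩ := hp
  exact ⟨p₁, e, p₂, rfl⟩

variable {P : Type*} [Group P] {ε : G.E → P}

lemma prod_map_reverse (hε : ∀ e, ε (G.bar e) = (ε e)⁻¹) (p : List G.E) :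
    ((p.map G.bar).reverse.map ε).prod = (p.map ε).prod⁻¹ := by
  rw [List.prod_inv_reverse, List.map_reverse, List.map_map, List.map_map]
  congr 3
  exact funext hε

namespace IsSpanningTree

variable {T : Set G.E}

lemma prod_map_eq_one (hT : G.IsSpanningTree T) (hε : ∀ e, ε (G.bar e) = (ε e)⁻¹)
    {p : List G.E} {v : G.V} (hp : ∀ e ∈ p, e ∈ T) (hw : G.IsWalk p v v) :
    (p.map ε).prod = 1 := by
  induction hk : p.length using Nat.strong_induction_on generalizing p with
  | _ k ih =>
    by_cases hne : p = []
    · rw [hne, List.map_nil, List.prod_nil]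
    obtain ⟨p₁, e, p₂, rfl⟩ := exists_backtrack (hT.2.2 v p hne hp hw)
    obtain ⟨u, hw₁, hw₂⟩ := isWalk_append.1 hw
    have hw₂' : G.IsWalk p₂ u v := hw₂.1 ▸ hw₂.2.2
    have hprod := ih (p₁ ++ p₂).length (by simp at hk ⊢; omega)
      (fun e he => hp e (by simp at he ⊢; tauto)) (isWalk_append.2 ⟨u, hw₁, hw₂'⟩) rfl
    simpa [hε] using hprod

lemma exists_potential (hT : G.IsSpanningTree T) (hε : ∀ e, ε (G.bar e) = (ε e)⁻¹) :
    ∃ c : G.V → P, ∀ e ∈ T, c (G.o e) * ε e = c (G.t e) := by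
  rcases isEmpty_or_nonempty G.V with hV | ⟨⟨r⟩⟩
  · exact ⟨fun _ => 1, fun e => hV.elim (G.t e)⟩
  choose p hpT hpw using fun v => hT.2.1 r v
  refine ⟨fun v => ((p v).map ε).prod, fun e he => ?_⟩
  have hloop : G.IsWalk ((p (G.o e) ++ [e]) ++ ((p (G.t e)).map G.bar).reverse) r r :=
    isWalk_append.2 ⟨G.t e, isWalk_append.2 ⟨G.o e, hpw _, rfl, rfl⟩, (hpw _).reverse⟩
  have hloopT : ∀ e' ∈ (p (G.o e) ++ [e]) ++ ((p (G.t e)).map G.bar).reverse, e' ∈ T := by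
    simp only [List.mem_append, List.mem_singleton, List.mem_reverse, List.mem_map]
    rintro e' ((he' | rfl) | ⟨e'', he'', rfl⟩)
    exacts [hpT _ _ he', he, hT.1 _ (hpT _ _ he'')]
  have hprod := hT.prod_map_eq_one hε hloopT hloop
  rw [List.map_append, List.prod_append, prod_map_reverse hε, mul_inv_eq_one] at hprod
  simpa using hprod

end IsSpanningTree

end SerreGraph

end Tree

/-! ### A ping-pong action of the fundamental group -/

namespace GraphOfGroups

open Cardinal

variable {G : SerreGraph} (𝒢 : GraphOfGroups G)

/-- The subgroups of a vertex group over which its directions are cosets: the image of every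
incoming edge group, and the trivial group (index `none`). -/
def directionStabilizer (v : G.V) : Option {e : G.E // G.t e = v} → Subgroup (𝒢.Gv v)
  | none => ⊥
  | some e => e.2 ▸ (𝒢.h e.1).range

/-- The directions at a vertex `v`, a `Γ_v`-set: the edges of the Bass–Serre tree with terminal
vertex `Γ_v`, together with a free orbit. -/
abbrev Direction (v : G.V) : Type := Σ k, 𝒢.Gv v ⧸ 𝒢.directionStabilizer v k

/-- The direction of the edge `e` itself, among the translates `γ e`. -/
def edgeDir (e : G.E) : 𝒢.Direction (G.t e) :=
  ⟨some ⟨e, rfl⟩, QuotientGroup.mk (s := 𝒢.directionStabilizer (G.t e) (some ⟨e, rfl⟩)) 1⟩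

/-- A direction in the free orbit. -/
def baseDir (v : G.V) : 𝒢.Direction v :=
  ⟨none, QuotientGroup.mk (s := 𝒢.directionStabilizer v none) 1⟩

variable {𝒢}

lemma mk_eq_edgeDir_iff {e : G.E} {k : Option {e' : G.E // G.t e' = G.t e}}
    {γ : 𝒢.Gv (G.t e)} :
    (⟨k, QuotientGroup.mk (s := 𝒢.directionStabilizer _ k) γ⟩ : 𝒢.Direction (G.t e)) = 𝒢.edgeDir e ↔
      k = some ⟨e, rfl⟩ ∧ γ ∈ (𝒢.h e).range := by
  rw [edgeDir, Sigma.mk.injEq]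
  refine and_congr_right fun hk => ?_
  subst hk
  rw [heq_eq_eq, eq_comm, QuotientGroup.eq, inv_one, one_mul]
  rfl

lemma smul_edgeDir_eq_iff {e : G.E} {γ : 𝒢.Gv (G.t e)} :
    γ • 𝒢.edgeDir e = 𝒢.edgeDir e ↔ γ ∈ (𝒢.h e).range := by
  have hsmul : γ • 𝒢.edgeDir e = ⟨some ⟨e, rfl⟩,
      QuotientGroup.mk (s := 𝒢.directionStabilizer _ (some ⟨e, rfl⟩)) (γ * 1)⟩ := rfl
  rw [hsmul, mk_eq_edgeDir_iff, mul_one, and_iff_right rfl]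

variable (𝒢)

/-- A set large enough to carry a free action of every vertex group, with infinitely many orbits
over every direction. -/
def Model : Type := ℕ ⊕ Σ v, 𝒢.Gv v × Option {e : G.E // G.t e = v}

instance : Infinite 𝒢.Model := inferInstanceAs (Infinite (ℕ ⊕ _))

lemma mk_prod_model (v : G.V) :
    #(𝒢.Gv v × Option {e : G.E // G.t e = v} × 𝒢.Model) = #𝒢.Model := by
  have hle : #(𝒢.Gv v × Option {e : G.E // G.t e = v}) ≤ #𝒢.Model :=
    mk_le_of_injective (f := fun x => Sum.inr ⟨v, x⟩)
      (Sum.inr_injective.comp sigma_mk_injective)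
  rw [← (Equiv.prodAssoc _ _ _).cardinal_eq, mk_prod, lift_id, lift_id]
  exact mul_eq_right (infinite_iff.1 inferInstance) hle (mk_ne_zero _)

/-- Coordinates on the model at a vertex: a group element, the type of a direction, and a
multiplicity. -/
def vertexEquiv (v : G.V) : 𝒢.Gv v × Option {e : G.E // G.t e = v} × 𝒢.Model ≃ 𝒢.Model :=
  (Cardinal.eq.1 (𝒢.mk_prod_model v)).some

/-- The free action of a vertex group on the model by left translation. -/
def vertexAction (v : G.V) : 𝒢.Gv v →* Equiv.Perm 𝒢.Model where
  toFun γ := (𝒢.vertexEquiv v).permCongr ((Equiv.mulLeft γ).prodCongr (Equiv.refl _))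
  map_one' := by ext; simp
  map_mul' γ δ := by ext; simp [Prod.map]

lemma vertexAction_vertexEquiv (v : G.V) (γ g : 𝒢.Gv v)
    (c : Option {e : G.E // G.t e = v} × 𝒢.Model) :
    𝒢.vertexAction v γ (𝒢.vertexEquiv v (g, c)) = 𝒢.vertexEquiv v (γ * g, c) := by
  simp [vertexAction]

/-- The direction of a point of the model at a vertex. -/
def dir (v : G.V) (z : 𝒢.Model) : 𝒢.Direction v :=
  ⟨((𝒢.vertexEquiv v).symm z).2.1, QuotientGroup.mk ((𝒢.vertexEquiv v).symm z).1⟩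

lemma dir_vertexEquiv (v : G.V) (g : 𝒢.Gv v) (k : Option {e : G.E // G.t e = v}) (i : 𝒢.Model) :
    𝒢.dir v (𝒢.vertexEquiv v (g, k, i)) =
      ⟨k, QuotientGroup.mk (s := 𝒢.directionStabilizer v k) g⟩ := by
  rw [dir, Equiv.symm_apply_apply]

lemma dir_vertexAction (v : G.V) (γ : 𝒢.Gv v) (z : 𝒢.Model) :
    𝒢.dir v (𝒢.vertexAction v γ z) = γ • 𝒢.dir v z := by
  obtain ⟨⟨g, k, i⟩, rfl⟩ := (𝒢.vertexEquiv v).surjective z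
  rw [vertexAction_vertexEquiv, dir_vertexEquiv, dir_vertexEquiv]
  rfl

lemma exists_edge_chart (e : G.E) :
    ∃ Ω : 𝒢.Ge e × 𝒢.Model × Bool ≃ 𝒢.Model,
      (∀ x y c, Ω (x * y, c) = 𝒢.vertexAction _ (𝒢.h e x) (Ω (y, c))) ∧
      ∀ x i b, 𝒢.dir _ (Ω (x, i, b)) = 𝒢.edgeDir e ↔ b = true := by
  obtain ⟨Ω, hmul, hdir⟩ := exists_equivariant_chart (𝒢.h_inj e)
    (Option.some_ne_none ⟨e, rfl⟩).symm (𝒢.mk_prod_model (G.t e))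
  refine ⟨Ω.trans (𝒢.vertexEquiv _), fun x y c => ?_, fun x i b => ?_⟩
  · rw [Equiv.trans_apply, hmul, Equiv.trans_apply, ← vertexAction_vertexEquiv]
  · rw [Equiv.trans_apply, ← hdir x i b, ← mk_eq_edgeDir_iff, ← dir_vertexEquiv]

/-- The permutation exchanging the two halves of the charts of `e` and `ē`. -/
def edgePerm {κ : Type*} (Ω : ∀ e, 𝒢.Ge e × κ × Bool ≃ κ) (e : G.E) : Equiv.Perm κ :=
  (Ω (G.bar e)).symm.trans (((𝒢.barEquiv e).symm.toEquiv.prodCongr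
    ((Equiv.refl κ).prodCongr Equiv.boolNot)).trans (Ω e))

section EdgePerm

variable {κ : Type*} (Ω : ∀ e, 𝒢.Ge e × κ × Bool ≃ κ)

lemma edgePerm_apply (e : G.E) (x : 𝒢.Ge e) (i : κ) (b : Bool) :
    𝒢.edgePerm Ω e (Ω (G.bar e) (𝒢.barEquiv e x, i, b)) = Ω e (x, i, !b) := by
  simp [edgePerm]

lemma edgePerm_bar (e : G.E) : 𝒢.edgePerm Ω (G.bar e) = (𝒢.edgePerm Ω e)⁻¹ := by
  rw [eq_inv_iff_mul_eq_one]
  ext z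
  obtain ⟨⟨x', i, b⟩, rfl⟩ := (Ω (G.bar e)).surjective z
  obtain ⟨x, rfl⟩ := (𝒢.barEquiv e).surjective x'
  have hbar : (⟨G.bar (G.bar e), 𝒢.barEquiv (G.bar e) (𝒢.barEquiv e x)⟩ : Σ e, 𝒢.Ge e) = ⟨e, x⟩ :=
    Sigma.ext (G.bar_bar e) (𝒢.barEquiv_coh e x)
  have hΩ : Ω (G.bar (G.bar e)) (𝒢.barEquiv (G.bar e) (𝒢.barEquiv e x), i, !b) = Ω e (x, i, !b) :=
    congrArg (fun y : Σ e, 𝒢.Ge e => Ω y.1 (y.2, i, !b)) hbar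
  rw [Equiv.Perm.mul_apply, edgePerm_apply, ← hΩ, edgePerm_apply, Bool.not_not,
    Equiv.Perm.one_apply]

end EdgePerm

lemma exists_edgePerm :
    ∃ ε : G.E → Equiv.Perm 𝒢.Model, (∀ e, ε (G.bar e) = (ε e)⁻¹) ∧
      (∀ e x, ε e * 𝒢.vertexAction _ (𝒢.h (G.bar e) (𝒢.barEquiv e x)) =
        𝒢.vertexAction _ (𝒢.h e x) * ε e) ∧
      ∀ e z, 𝒢.dir _ (ε e z) = 𝒢.edgeDir e ↔ 𝒢.dir _ z ≠ 𝒢.edgeDir (G.bar e) := by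
  choose Ω hmul hdir using 𝒢.exists_edge_chart
  have hsurj : ∀ e z, ∃ x i b, Ω (G.bar e) (𝒢.barEquiv e x, i, b) = z := by
    intro e z
    obtain ⟨⟨x', i, b⟩, rfl⟩ := (Ω (G.bar e)).surjective z
    obtain ⟨x, rfl⟩ := (𝒢.barEquiv e).surjective x'
    exact ⟨x, i, b, rfl⟩
  refine ⟨𝒢.edgePerm Ω, 𝒢.edgePerm_bar Ω, fun e x => ?_, fun e z => ?_⟩
  · ext z
    obtain ⟨y, i, b, rfl⟩ := hsurj e z
    rw [Equiv.Perm.mul_apply, Equiv.Perm.mul_apply, ← hmul, ← map_mul, edgePerm_apply,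
      edgePerm_apply, hmul]
  · obtain ⟨y, i, b, rfl⟩ := hsurj e z
    rw [edgePerm_apply, hdir, Ne, hdir]
    cases b <;> simp

section FundamentalGroup

variable (T : Set G.E)

lemma edgeElt_mul_vtxIncl (e : G.E) (x : 𝒢.Ge e) :
    𝒢.edgeElt T e * 𝒢.vtxIncl T _ (𝒢.h (G.bar e) (𝒢.barEquiv e x)) =
      𝒢.vtxIncl T _ (𝒢.h e x) * 𝒢.edgeElt T e := by
  have hrel := 𝒢.mk_rel_one (T := T) (Or.inr (Or.inr (Or.inl ⟨e, x, rfl⟩)))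
  rw [map_mul, map_mul, map_mul, map_inv, map_inv, mul_inv_eq_one, mul_inv_eq_iff_eq_mul] at hrel
  exact hrel

lemma edgeElt_bar (e : G.E) : 𝒢.edgeElt T (G.bar e) = (𝒢.edgeElt T e)⁻¹ := by
  have hrel := 𝒢.mk_rel_one (T := T) (Or.inr (Or.inl ⟨e, rfl⟩))
  rw [map_mul] at hrel
  exact (inv_eq_of_mul_eq_one_right hrel).symm

variable {T}

lemma edgeElt_eq_one {e : G.E} (he : e ∈ T) : 𝒢.edgeElt T e = 1 :=
  𝒢.mk_rel_one (Or.inr (Or.inr (Or.inr ⟨e, he, rfl⟩)))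

variable {𝒢}

lemma pi1_induction {P : 𝒢.pi1 T → Prop} (one : P 1)
    (vtxIncl_mul : ∀ v γ g, P g → P (𝒢.vtxIncl T v γ * g))
    (edgeElt_mul : ∀ e g, P g → P (𝒢.edgeElt T e * g)) (g : 𝒢.pi1 T) : P g := by
  let π : FreeGroup 𝒢.gens →* 𝒢.pi1 T := PresentedGroup.mk (𝒢.rels T)
  obtain ⟨w, rfl⟩ : ∃ w, π w = g := PresentedGroup.mk_surjective (𝒢.rels T) g
  suffices hmul : ∀ g, P g → P (π w * g) from mul_one (π w) ▸ hmul 1 one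
  induction w using FreeGroup.induction_on with
  | C1 => simp only [map_one, one_mul, imp_self, implies_true]
  | of x =>
    rcases x with ⟨v, γ⟩ | e
    exacts [vtxIncl_mul v γ, edgeElt_mul e]
  | inv_of x _ =>
    rw [map_inv]
    rcases x with ⟨v, γ⟩ | e
    · have := vtxIncl_mul v γ⁻¹
      rwa [map_inv] at this
    · have := edgeElt_mul (G.bar e)
      rwa [edgeElt_bar] at this
  | mul x y hx hy =>
    intro g hg
    rw [map_mul, mul_assoc]
    exact hx _ (hy _ hg)

variable (𝒢)

lemma exists_hom_of_forall_rel {P : Type*} [Group P] (hT : G.IsSpanningTree T)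
    {a : ∀ v, 𝒢.Gv v →* P} {ε : G.E → P} (hbar : ∀ e, ε (G.bar e) = (ε e)⁻¹)
    (hε : ∀ e x, ε e * a _ (𝒢.h (G.bar e) (𝒢.barEquiv e x)) = a _ (𝒢.h e x) * ε e) :
    ∃ (ρ : 𝒢.pi1 T →* P) (c : G.V → P),
      (∀ v γ, ρ (𝒢.vtxIncl T v γ) = c v * a v γ * (c v)⁻¹) ∧
      ∀ e, ρ (𝒢.edgeElt T e) = c (G.t e) * ε e * (c (G.t (G.bar e)))⁻¹ := by
  obtain ⟨c, hc⟩ := hT.exists_potential (ε := fun e => (ε e)⁻¹) fun e => congrArg _ (hbar e)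
  let f : 𝒢.gens → P := Sum.elim (fun x => c x.1 * a x.1 x.2 * (c x.1)⁻¹)
    fun e => c (G.t e) * ε e * (c (G.t (G.bar e)))⁻¹
  have hf : ∀ r ∈ 𝒢.rels T, FreeGroup.lift f r = 1 := by
    rintro r (⟨v, g, h', rfl⟩ | ⟨e, rfl⟩ | ⟨e, x, rfl⟩ | ⟨e, he, rfl⟩)
    · simp only [map_mul, map_inv, FreeGroup.lift_apply_of, f, Sum.elim_inl]
      group
    · simp only [map_mul, FreeGroup.lift_apply_of, f, Sum.elim_inr, G.bar_bar, hbar]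
      group
    · have hconj := mul_inv_eq_iff_eq_mul.2 (hε e x)
      simp only [map_mul, map_inv, FreeGroup.lift_apply_of, f, Sum.elim_inr, Sum.elim_inl,
        ← hconj]
      group
    · simp only [FreeGroup.lift_apply_of, f, Sum.elim_inr, ← hc e he]
      simp only [SerreGraph.o, inv_mul_cancel_right, mul_inv_cancel]
  exact ⟨PresentedGroup.toGroup hf, c,
    fun v γ => PresentedGroup.toGroup.of hf (x := Sum.inl ⟨v, γ⟩),
    fun e => PresentedGroup.toGroup.of hf (x := Sum.inr e)⟩

/-- A permutation representation of the fundamental group with projections to the directions, in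
which every edge element `e` maps the points outside the direction of `ē` onto the points in the
direction of `e`. -/
structure DirectedAction (T : Set G.E) (κ : Type) where
  /-- The representation. -/
  ρ : 𝒢.pi1 T →* Equiv.Perm κ
  /-- The direction of a point at a vertex. -/
  proj : ∀ v, κ → 𝒢.Direction v
  /-- A point in a free direction of a vertex. -/
  base : G.V → κ
  proj_vtxIncl : ∀ v γ z, proj v (ρ (𝒢.vtxIncl T v γ) z) = γ • proj v z
  proj_base : ∀ v, proj v (base v) = 𝒢.baseDir v
  proj_edgeElt : ∀ e z,
    proj _ (ρ (𝒢.edgeElt T e) z) = 𝒢.edgeDir e ↔ proj _ z ≠ 𝒢.edgeDir (G.bar e)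

lemma nonempty_directedAction (hT : G.IsSpanningTree T) :
    Nonempty (𝒢.DirectedAction T 𝒢.Model) := by
  obtain ⟨ε, hbar, hconj, hdir⟩ := 𝒢.exists_edgePerm
  obtain ⟨ρ, c, hρv, hρe⟩ := 𝒢.exists_hom_of_forall_rel hT hbar hconj
  refine ⟨⟨ρ, fun v z => 𝒢.dir v ((c v)⁻¹ z),
    fun v => c v (𝒢.vertexEquiv v (1, none, Classical.arbitrary _)), fun v γ z => ?_, fun v => ?_,
    fun e z => ?_⟩⟩
  · simp [hρv, dir_vertexAction]
  · simp [dir_vertexEquiv, baseDir]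
  · rw [← hdir]
    simp [hρe]

end FundamentalGroup

end GraphOfGroups

/-- Ping-pong projections for a family of homomorphisms `i v : Q v →* L`: equivariant maps from an
`L`-set `Y` to `Q v`-sets such that, for any two distinct cosets of the groups `Q v`, the projection
to one is constant off a fibre of the projection to the other. -/
structure PingPong {V L : Type*} [Group L] {Q : V → Type*} [∀ v, Group (Q v)] (i : ∀ v, Q v →* L)
    (S : V → Type*) [∀ v, MulAction (Q v) (S v)] (Y : Type*) [MulAction L Y] where
  /-- The projections. -/
  proj : ∀ v, Y → S v
  /-- Points whose orbits under `Q v` avoid the fibres over which other translates project. -/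
  base : V → Y
  proj_smul : ∀ v γ z, proj v (i v γ • z) = γ • proj v z
  separated : ∀ v' v g, (v' = v ∧ g ∈ (i v).range) ∨ ∃ (σ' : S v') (σ : S v),
    (∀ γ : Q v, γ • proj v (base v) ≠ σ) ∧ ∀ z, proj v' z = σ' ∨ proj v (g • z) = σ

namespace GraphOfGroups

variable {G : SerreGraph} {𝒢 : GraphOfGroups G}

/-- The edge of the graph covered by a direction, if any. -/
def dirEdge {v : G.V} (σ : 𝒢.Direction v) : Option G.E := σ.1.map Subtype.val

lemma dirEdge_smul {v : G.V} (γ : 𝒢.Gv v) (σ : 𝒢.Direction v) : dirEdge (γ • σ) = dirEdge σ := rfl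

lemma dirEdge_edgeDir (e : G.E) : dirEdge (𝒢.edgeDir e) = some e := rfl

lemma dirEdge_baseDir (v : G.V) : dirEdge (𝒢.baseDir v) = none := rfl

/-- `ReducedForm T v' v σ g` says that `g` is represented by a reduced word
`γ₀ e₁ γ₁ ⋯ eₙ γₙ` labelling a path of the Bass–Serre tree from `v` to `g v'` which leaves `v` in
the direction `σ = γ₀ e₁`. -/
inductive ReducedForm (T : Set G.E) (v' : G.V) : (v : G.V) → 𝒢.Direction v → 𝒢.pi1 T → Prop
  | nil (γ : 𝒢.Gv v') : ReducedForm T v' v' (γ • 𝒢.baseDir v') (𝒢.vtxIncl T v' γ)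
  | cons (e : G.E) (γ : 𝒢.Gv (G.t e)) {σ : 𝒢.Direction (G.t (G.bar e))} {g : 𝒢.pi1 T}
      (h : ReducedForm T v' (G.t (G.bar e)) σ g) (hσ : σ ≠ 𝒢.edgeDir (G.bar e)) :
      ReducedForm T v' (G.t e) (γ • 𝒢.edgeDir e) (𝒢.vtxIncl T _ γ * 𝒢.edgeElt T e * g)

namespace ReducedForm

variable {T : Set G.E} {v v' : G.V} {σ : 𝒢.Direction v} {g : 𝒢.pi1 T}

lemma vtxIncl_mul (h : ReducedForm T v' v σ g) (γ : 𝒢.Gv v) :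
    ReducedForm T v' v (γ • σ) (𝒢.vtxIncl T v γ * g) := by
  cases h with
  | nil δ =>
    rw [smul_smul, ← map_mul]
    exact nil _
  | cons e δ h hσ =>
    rw [smul_smul, ← mul_assoc, ← mul_assoc, ← map_mul]
    exact cons e _ h hσ

lemma exists_edgeElt_mul_of_backtrack (h : ReducedForm T v' v σ g) {e : G.E}
    (hv : G.t (G.bar e) = v) (hσ : HEq σ (𝒢.edgeDir (G.bar e))) :
    ∃ σ', ReducedForm T v' (G.t e) σ' (𝒢.edgeElt T e * g) := by
  have hedge : dirEdge σ = some (G.bar e) := by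
    subst hv
    rw [eq_of_heq hσ, dirEdge_edgeDir]
  cases h with
  | nil γ => simp [dirEdge_smul, dirEdge_baseDir] at hedge
  | @cons e' γ τ g' h _ =>
    obtain rfl : e' = G.bar e := by simpa [dirEdge_smul, dirEdge_edgeDir] using hedge
    obtain ⟨x', rfl⟩ := smul_edgeDir_eq_iff.1 (eq_of_heq hσ)
    obtain ⟨x, rfl⟩ := (𝒢.barEquiv e).surjective x'
    obtain ⟨τ', h'⟩ : ∃ τ', ReducedForm T v' (G.t e) τ' g' := G.bar_bar e ▸ ⟨τ, h⟩
    refine ⟨𝒢.h e x • τ', ?_⟩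
    rw [← mul_assoc, ← mul_assoc, edgeElt_mul_vtxIncl, edgeElt_bar, mul_inv_cancel_right]
    exact h'.vtxIncl_mul (𝒢.h e x)

lemma exists_edgeElt_mul (e : G.E) {σ : 𝒢.Direction (G.t (G.bar e))}
    (h : ReducedForm T v' _ σ g) :
    ∃ σ', ReducedForm T v' (G.t e) σ' (𝒢.edgeElt T e * g) := by
  by_cases hσ : σ = 𝒢.edgeDir (G.bar e)
  · exact h.exists_edgeElt_mul_of_backtrack rfl (heq_of_eq hσ)
  · have := cons e 1 h hσ
    rw [map_one, one_mul] at this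
    exact ⟨_, this⟩

lemma exists_of_isWalk (h : ReducedForm T v' v σ g) {p : List G.E} {w : G.V}
    (hp : ∀ e ∈ p, e ∈ T) (hw : G.IsWalk p v w) : ∃ σ', ReducedForm T v' w σ' g := by
  induction p generalizing v with
  | nil =>
    obtain rfl : v = w := hw
    exact ⟨σ, h⟩
  | cons e p ih =>
    obtain ⟨rfl, hw⟩ := hw
    obtain ⟨σ', h'⟩ := h.exists_edgeElt_mul e
    rw [edgeElt_eq_one 𝒢 (hp e List.mem_cons_self), one_mul] at h'
    exact ih h' (fun e he => hp e (List.mem_cons_of_mem _ he)) hw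

lemma exists_reducedForm (hT : G.IsSpanningTree T) (v' v : G.V) (g : 𝒢.pi1 T) :
    ∃ σ, ReducedForm T v' v σ g := by
  have move : ∀ {w g}, (∃ σ, ReducedForm T v' w σ g) → ∀ v, ∃ σ : 𝒢.Direction v,
      ReducedForm T v' v σ g := by
    rintro w g ⟨σ, h⟩ v
    obtain ⟨p, hp, hw⟩ := hT.2.1 w v
    exact h.exists_of_isWalk hp hw
  revert v
  induction g using pi1_induction with
  | one => exact move ⟨_, map_one (𝒢.vtxIncl T v') ▸ nil 1⟩
  | vtxIncl_mul w γ g ih =>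
    obtain ⟨σ, h⟩ := ih w
    exact move ⟨_, h.vtxIncl_mul γ⟩
  | edgeElt_mul e g ih =>
    obtain ⟨σ, h⟩ := ih (G.t (G.bar e))
    exact move (h.exists_edgeElt_mul e)

lemma proj_eq (h : ReducedForm T v' v σ g) {κ : Type} (A : 𝒢.DirectedAction T κ) :
    (v' = v ∧ g ∈ (𝒢.vtxIncl T v).range) ∨
      (dirEdge σ ≠ none ∧ ∃ σ', ∀ z, A.proj v' z = σ' ∨ A.proj v (A.ρ g z) = σ) := by
  induction h with
  | nil γ => exact Or.inl ⟨rfl, γ, rfl⟩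
  | cons e γ h hσ ih =>
    refine Or.inr ⟨Option.some_ne_none e, ?_⟩
    simp only [map_mul, Equiv.Perm.mul_apply, A.proj_vtxIncl, smul_left_cancel_iff, A.proj_edgeElt]
    rcases ih with ⟨rfl, δ, rfl⟩ | ⟨-, σ', hz⟩
    · refine ⟨δ⁻¹ • 𝒢.edgeDir (G.bar e), fun z => or_iff_not_imp_left.2 fun hz hz' => hz ?_⟩
      rw [← hz', A.proj_vtxIncl, inv_smul_smul]
    · exact ⟨σ', fun z => (hz z).imp_right fun hzσ => ne_of_eq_of_ne hzσ hσ⟩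

end ReducedForm

lemma nonempty_pingPong (𝒢 : GraphOfGroups G) {T : Set G.E} (hT : G.IsSpanningTree T) :
    ∃ _ : MulAction (𝒢.pi1 T) 𝒢.Model,
      Nonempty (PingPong (𝒢.vtxIncl T) 𝒢.Direction 𝒢.Model) := by
  obtain ⟨A⟩ := 𝒢.nonempty_directedAction hT
  let _ : MulAction (𝒢.pi1 T) 𝒢.Model := MulAction.compHom 𝒢.Model A.ρ
  refine ⟨inferInstance, ⟨⟨A.proj, A.base, A.proj_vtxIncl, fun v' v g => ?_⟩⟩⟩
  obtain ⟨σ, h⟩ := ReducedForm.exists_reducedForm hT v' v g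
  refine (h.proj_eq A).imp_right ?_
  rintro ⟨hσ, σ', hz⟩
  refine ⟨σ', σ, fun γ hγ => hσ ?_, hz⟩
  rw [← hγ, dirEdge_smul, A.proj_base, dirEdge_baseDir]

end GraphOfGroups

/-! ### Combining cochains of the vertex groups -/

lemma card_le_two_of_forall_eq_or_eq {ι X Y : Type*} [Fintype ι] {f : ι → X} {g : ι → Y}
    (hf : f.Injective) (hg : g.Injective) {x : X} {y : Y} (h : ∀ j, f j = x ∨ g j = y) :
    Fintype.card ι ≤ 2 := by
  classical
  refine Fintype.card_le_of_injective (β := Bool) (fun j => decide (f j = x)) fun j k hjk => ?_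
  rw [decide_eq_decide] at hjk
  by_cases hj : f j = x
  · exact hf (hj.trans (hjk.1 hj).symm)
  · exact hg (((h j).resolve_left hj).trans ((h k).resolve_left (hj ∘ hjk.2)).symm)

lemma abs_finsum_le_of_subsingleton_support {ι : Type*} {f : ι → ℝ}
    (hf : f.support.Subsingleton) {C : ℝ} (hC₀ : 0 ≤ C) (hC : ∀ j, |f j| ≤ C) :
    |∑ᶠ j, f j| ≤ C := by
  rcases hf.eq_empty_or_singleton with hempty | ⟨j, hj⟩
  · simpa [Function.support_eq_empty_iff.1 hempty] using hC₀
  · have : ∑ᶠ k, f k = f j := finsum_eq_single f j fun k hk => by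
      by_contra hne
      exact hk (hj ▸ Function.mem_support.2 hne : k ∈ ({j} : Set ι))
    exact this ▸ hC j

/-- The orbit map of a point, as an equivariant map. -/
def orbitHom (Λ : Type*) [Group Λ] {Y : Type*} [MulAction Λ Y] (y : Y) : Λ →[Λ] Y where
  toFun g := g • y
  map_smul' g x := mul_smul g x y

namespace PingPong

variable {V L : Type*} [Group L] {Q : V → Type*} [∀ v, Group (Q v)] {i : ∀ v, Q v →* L}
  {S : V → Type*} [∀ v, MulAction (Q v) (S v)] {Y : Type*} [MulAction L Y]
  (D : PingPong i S Y)

/-- The projection to a left coset of some `Q v` in `L`, i.e. to a vertex of the Bass–Serre tree.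
It depends on a choice of representatives, which is immaterial up to the action of `Q v`. -/
def cosetProj (c : Σ v, L ⧸ (i v).range) (z : Y) : S c.1 := D.proj c.1 (c.2.out⁻¹ • z)

lemma cosetProj_eq_or_eq {c c' : Σ v, L ⧸ (i v).range} (hne : c ≠ c') :
    ∃ σ σ', ∀ z, D.cosetProj c z = σ ∨ D.cosetProj c' z = σ' := by
  obtain ⟨v, c⟩ := c
  obtain ⟨v', c'⟩ := c'
  rcases D.separated v v' (c'.out⁻¹ * c.out) with ⟨rfl, hmem⟩ | ⟨σ, σ', -, hz⟩
  · rw [← QuotientGroup.eq, QuotientGroup.out_eq', QuotientGroup.out_eq'] at hmem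
    exact absurd (congrArg (Sigma.mk v) hmem.symm) hne
  · refine ⟨σ, σ', fun z => ?_⟩
    simpa only [cosetProj, mul_smul, smul_inv_smul] using hz (c.out⁻¹ • z)

lemma eq_of_injective_cosetProj {n : ℕ} {t : Fin (n + 3) → Y} {c c' : Σ v, L ⧸ (i v).range}
    (hc : (D.cosetProj c ∘ t).Injective) (hc' : (D.cosetProj c' ∘ t).Injective) : c = c' := by
  by_contra hne
  obtain ⟨σ, σ', h⟩ := D.cosetProj_eq_or_eq hne
  have := card_le_two_of_forall_eq_or_eq hc hc' fun j => h (t j)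
  rw [Fintype.card_fin] at this
  omega

lemma app_cosetProj_mk {v : V} (B : CochainMap (Q v) (Q v) (S v)) {n : ℕ} {f : Cochain (Q v) n}
    (hf : f ∈ grpC (Q v) n) (g : L) (t : Fin (n + 1) → Y) :
    B.app n f (D.cosetProj ⟨v, (g : L ⧸ (i v).range)⟩ ∘ t) =
      B.app n f fun j => D.proj v (g⁻¹ • t j) := by
  obtain ⟨γ, hγ⟩ : g⁻¹ * (g : L ⧸ (i v).range).out ∈ (i v).range := by
    rw [← QuotientGroup.eq, QuotientGroup.out_eq']
  have hout : (g : L ⧸ (i v).range).out⁻¹ = i v γ⁻¹ * g⁻¹ := by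
    rw [map_inv, hγ]
    group
  refine Eq.trans (congrArg _ (funext fun j => ?_)) (B.app_mem_invF hf.1 hf.2 γ⁻¹ _)
  rw [Function.comp_apply, cosetProj, hout, mul_smul, D.proj_smul]

variable {A : ∀ v, CochainMap (Q v) (Q v) (S v)} {n : ℕ}

lemma support_app_cosetProj_subsingleton (hA : ∀ v, (A v).IsTransfer)
    (F : ∀ v, Cochain (Q v) (n + 2)) (t : Fin (n + 3) → Y) :
    (Function.support fun c : Σ v, L ⧸ (i v).range =>
      (A c.1).app (n + 2) (F c.1) (D.cosetProj c ∘ t)).Subsingleton := fun c hc c' hc' =>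
  D.eq_of_injective_cosetProj
    (not_not.1 fun h => hc ((hA c.1).eq_zero_of_not_injective _ h))
    (not_not.1 fun h => hc' ((hA c'.1).eq_zero_of_not_injective _ h))

variable (hA : ∀ v, (A v).IsTransfer)

/-- The combination of a family of cochains of degree at least two on the groups `Q v` to a
cochain on `Y`: each simplex is projected to the cosets, and at most one of the projections is
nondegenerate. -/
def combine (n : ℕ) : (∀ v, Cochain (Q v) (n + 2)) →ₗ[ℝ] Cochain Y (n + 2) where
  toFun F t := ∑ᶠ c : Σ v, L ⧸ (i v).range, (A c.1).app (n + 2) (F c.1) (D.cosetProj c ∘ t)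
  map_add' F F' := funext fun t => by
    simp only [Pi.add_apply, map_add]
    exact finsum_add_distrib (D.support_app_cosetProj_subsingleton hA F t).finite
      (D.support_app_cosetProj_subsingleton hA F' t).finite
  map_smul' r F := funext fun t => by
    simp only [Pi.smul_apply, map_smul]
    exact (smul_finsum' r (D.support_app_cosetProj_subsingleton hA F t).finite).symm

lemma combine_apply (F : ∀ v, Cochain (Q v) (n + 2)) (t : Fin (n + 3) → Y) :
    D.combine hA n F t =
      ∑ᶠ c : Σ v, L ⧸ (i v).range, (A c.1).app (n + 2) (F c.1) (D.cosetProj c ∘ t) := rfl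

variable {F : ∀ v, Cochain (Q v) (n + 2)}

lemma abs_combine_le {C : ℝ} (hC₀ : 0 ≤ C) (hC : ∀ v s, |F v s| ≤ C) (t : Fin (n + 3) → Y) :
    |D.combine hA n F t| ≤ C :=
  abs_finsum_le_of_subsingleton_support (D.support_app_cosetProj_subsingleton hA F t) hC₀
    fun c => (A c.1).abs_app_le (hC c.1) _

lemma combine_mem_boundedFunctions [Finite V] (hF : ∀ v, F v ∈ grpC (Q v) (n + 2)) :
    D.combine hA n F ∈ boundedFunctions (Fin (n + 3) → Y) := by
  obtain ⟨C, hC⟩ := (Set.finite_range fun v => supN (F v)).bddAbove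
  refine ⟨max C 0, D.abs_combine_le hA (le_max_right _ _) fun v s => ?_⟩
  exact (abs_le_supN (hF v).1 s).trans ((hC ⟨v, rfl⟩).trans (le_max_left _ _))

lemma combine_mem_invF (hF : ∀ v, F v ∈ grpC (Q v) (n + 2)) :
    D.combine hA n F ∈ invF L Y (n + 2) := by
  intro g t
  let translate : (Σ v, L ⧸ (i v).range) ≃ Σ v, L ⧸ (i v).range :=
    Equiv.sigmaCongrRight fun _ => MulAction.toPerm g⁻¹
  refine (finsum_congr fun ⟨v, c⟩ => ?_).trans (finsum_comp_equiv translate)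
  have htranslate : translate ⟨v, c⟩ = ⟨v, ((g⁻¹ * c.out : L) : L ⧸ (i v).range)⟩ :=
    congrArg (Sigma.mk v) (congrArg (g⁻¹ • ·) (QuotientGroup.out_eq' c).symm)
  rw [htranslate, D.app_cosetProj_mk _ (hF v), mul_inv_rev, inv_inv]
  simp only [mul_smul]
  rfl

lemma gcob_combine (F : ∀ v, Cochain (Q v) (n + 2)) :
    gcob Y (n + 2) (D.combine hA n F) =
      D.combine hA (n + 1) fun v => gcob (Q v) (n + 2) (F v) := by
  funext t
  have hfinite (j : Fin (n + 4)) :=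
    (D.support_app_cosetProj_subsingleton hA F (t ∘ j.succAbove)).finite
  simp only [gcob_apply, combine_apply, mul_finsum' _ _ (hfinite _)]
  rw [← finsum_sum_comm]
  · refine finsum_congr fun c => ?_
    rw [← (A c.1).gcob_app, gcob_apply]
    rfl
  · exact fun j _ => (hfinite j).subset fun c => right_ne_zero_of_mul

lemma combine_smul_base (hF : ∀ v, F v ∈ grpC (Q v) (n + 2)) (v : V) (γ : Fin (n + 3) → Q v) :
    D.combine hA n F (fun j => i v (γ j) • D.base v) =
      (A v).app (n + 2) (F v) fun j => γ j • D.proj v (D.base v) := by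
  rw [combine_apply, finsum_eq_single _ ⟨v, ((1 : L) : L ⧸ (i v).range)⟩]
  · rw [D.app_cosetProj_mk _ (hF v)]
    simp only [inv_one, one_smul, D.proj_smul]
  · rintro ⟨v', c⟩ hne
    refine (hA v').eq_zero_of_not_injective _ fun hinj => ?_
    rcases D.separated v' v c.out with ⟨rfl, hmem⟩ | ⟨σ', σ, hσ, hz⟩
    · refine hne (congrArg (Sigma.mk v') ?_)
      rwa [← QuotientGroup.out_eq' c, eq_comm, QuotientGroup.eq, inv_one, one_mul]
    · have hconst (j) : D.cosetProj ⟨v', c⟩ (i v (γ j) • D.base v) = σ' := by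
        refine (hz _).resolve_right fun h => hσ (γ j) ?_
        rwa [smul_inv_smul, D.proj_smul] at h
      exact Fin.zero_ne_one (hinj ((hconst 0).trans (hconst 1).symm))

/-- The combination of a family of cochains on the groups `Q v` to a cochain on `L`, obtained by
pulling back along an orbit map. -/
def combineAt (y : Y) (n : ℕ) : (∀ v, Cochain (Q v) (n + 2)) →ₗ[ℝ] Cochain L (n + 2) :=
  (CochainMap.pullback (orbitHom L y)).app (n + 2) ∘ₗ D.combine hA n

variable (y : Y)

lemma gcob_combineAt (F : ∀ v, Cochain (Q v) (n + 2)) :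
    gcob L (n + 2) (D.combineAt hA y n F) =
      D.combineAt hA y (n + 1) fun v => gcob (Q v) (n + 2) (F v) := by
  rw [combineAt, LinearMap.comp_apply, CochainMap.gcob_app, D.gcob_combine]
  rfl

lemma combineAt_mem_grpC [Finite V] (hF : ∀ v, F v ∈ grpC (Q v) (n + 2)) :
    D.combineAt hA y n F ∈ grpC L (n + 2) :=
  ⟨comp_mem_boundedFunctions (D.combine_mem_boundedFunctions hA hF) _,
    (CochainMap.pullback (orbitHom L y)).app_mem_invF
      (D.combine_mem_boundedFunctions hA hF) (D.combine_mem_invF hA hF)⟩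

lemma combineAt_mem_grpZ [Finite V] (hF : ∀ v, F v ∈ grpZ (Q v) (n + 2)) :
    D.combineAt hA y n F ∈ grpZ L (n + 2) := by
  refine ⟨D.combineAt_mem_grpC hA y fun v => (hF v).1, ?_⟩
  have hcocycle : (fun v => gcob (Q v) (n + 2) (F v)) = 0 := funext fun v => (hF v).2
  rw [SetLike.mem_coe, LinearMap.mem_ker, D.gcob_combineAt, hcocycle, map_zero]

lemma combineAt_mem_grpB [Finite V] (hF : ∀ v, F v ∈ grpB (Q v) (n + 2)) :
    D.combineAt hA y n F ∈ grpB L (n + 2) := by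
  choose U hU hUF using hF
  obtain rfl : (fun v => gcob (Q v) (n + 1) (U v)) = F := funext hUF
  cases n with
  | zero =>
    have hzero (v) : (A v).app 2 (gcob (Q v) 1 (U v)) = 0 := by
      rw [← (A v).gcob_app, (hA v).app_one_eq_zero (hU v), map_zero]
    have : D.combine hA 0 (fun v => gcob (Q v) 1 (U v)) = 0 := funext fun t => by
      simp [combine_apply, hzero]
    rw [combineAt, LinearMap.comp_apply, this, map_zero]
    exact Submodule.zero_mem _
  | succ n => exact ⟨_, D.combineAt_mem_grpC hA y hU, D.gcob_combineAt hA y U⟩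

lemma pbG_combineAt_sub_mem_grpB [Finite V] (hF : ∀ v, F v ∈ grpZ (Q v) (n + 2)) (v : V) :
    pbG (i v) (n + 2) (D.combineAt hA y n F) - F v ∈ grpB (Q v) (n + 2) := by
  have hF' : ∀ v, F v ∈ grpC (Q v) (n + 2) := fun v => (hF v).1
  let _ : MulAction (Q v) Y := MulAction.compHom Y (i v)
  have : Nonempty Y := ⟨y⟩
  have hcocycle : gcob Y (n + 2) (D.combine hA n F) = 0 := by
    rw [D.gcob_combine, show (fun v => gcob (Q v) (n + 2) (F v)) = 0 from
      funext fun v => (hF v).2, map_zero]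
  have hmove := CochainMap.app_sub_app_mem_grpB
    (.pullback (orbitHom (Q v) y)) (.pullback (orbitHom (Q v) (D.base v)))
    (D.combine_mem_boundedFunctions hA hF')
    (fun γ => D.combine_mem_invF hA hF' (i v γ)) hcocycle
  have htransfer := CochainMap.app_sub_app_mem_grpB
    (.comp (.pullback (orbitHom (Q v) (D.proj v (D.base v)))) (A v)) (.id (Q v) (Q v))
    (hF' v).1 (hF' v).2 (hF v).2
  have hbase : (CochainMap.pullback (orbitHom (Q v) (D.base v))).app (n + 2) (D.combine hA n F) =
      (CochainMap.comp (.pullback (orbitHom (Q v) (D.proj v (D.base v)))) (A v)).app (n + 2)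
        (F v) := funext (D.combine_smul_base hA hF' v)
  have := Submodule.add_mem _ hmove htransfer
  rwa [hbase, sub_add_sub_cancel] at this

end PingPong

/-! ### The seminorm on bounded cohomology -/

section hbNorm

variable {Λ Λ' : Type*} [Group Λ] [Group Λ'] {n : ℕ}

lemma HbClass_surjective : Function.Surjective (HbClass : grpZ Λ n → Hb Λ n) :=
  Submodule.Quotient.mk_surjective _

lemma HbClass_eq_iff {f g : grpZ Λ n} : HbClass f = HbClass g ↔ (f - g : Cochain Λ n) ∈ grpB Λ n :=
  Submodule.Quotient.eq _

lemma hbNorm_nonneg (φ : Hb Λ n) : 0 ≤ hbNorm φ := by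
  apply Real.sInf_nonneg
  rintro _ ⟨f, -, rfl⟩
  exact supN_nonneg _

lemma hbNorm_HbClass_le (f : grpZ Λ n) : hbNorm (HbClass f) ≤ supN f.1 := by
  refine csInf_le ⟨0, ?_⟩ ⟨f, rfl, rfl⟩
  rintro _ ⟨g, -, rfl⟩
  exact supN_nonneg _

lemma exists_HbClass_eq_supN_lt (φ : Hb Λ n) {ε : ℝ} (hε : 0 < ε) :
    ∃ f : grpZ Λ n, HbClass f = φ ∧ supN f.1 < hbNorm φ + ε := by
  obtain ⟨f, hf⟩ := HbClass_surjective φ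
  obtain ⟨_, ⟨g, hg, rfl⟩, hlt⟩ := Real.lt_sInf_add_pos
    (s := {r : ℝ | ∃ f : grpZ Λ n, HbClass f = φ ∧ r = supN f.1}) ⟨_, f, hf, rfl⟩ hε
  exact ⟨g, hg, hlt⟩

lemma hbRes_HbClass (φ : Λ' →* Λ) (f : grpZ Λ n) :
    hbRes φ n (HbClass f) = HbClass ⟨pbG φ n f.1, pbG_mem_grpZ φ n f.2⟩ := rfl

lemma hbNorm_hbRes_le (φ : Λ' →* Λ) (α : Hb Λ n) : hbNorm (hbRes φ n α) ≤ hbNorm α := by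
  refine le_of_forall_pos_le_add fun ε hε => ?_
  obtain ⟨f, rfl, hf⟩ := exists_HbClass_eq_supN_lt α hε
  calc hbNorm (hbRes φ n (HbClass f)) ≤ supN (pbG φ n f.1) := hbNorm_HbClass_le _
    _ ≤ supN f.1 := supN_le (supN_nonneg _) fun _ => abs_le_supN f.2.1.1 _
    _ ≤ hbNorm (HbClass f) + ε := hf.le

end hbNorm

/-! ### Degree one -/

lemma addMonoidHom_eq_zero_of_bounded {M : Type*} [AddMonoid M] (φ : M →+ ℝ) {C : ℝ}
    (hC : ∀ x, |φ x| ≤ C) : φ = 0 := by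
  ext x
  by_contra hx
  obtain ⟨k, hk⟩ := exists_lt_nsmul (abs_pos.2 hx) C
  exact (hC (k • x)).not_gt (by rwa [map_nsmul, abs_nsmul])

lemma eq_zero_of_mem_grpZ_one {Λ : Type*} [Group Λ] {f : Cochain Λ 1} (hf : f ∈ grpZ Λ 1) :
    f = 0 := by
  obtain ⟨⟨⟨C, hC⟩, hinv⟩, hcocycle⟩ := hf
  have hsmul (g a b : Λ) : f ![g * a, g * b] = f ![a, b] := by
    rw [← hinv g ![a, b]]
    exact congrArg f (funext fun j => by fin_cases j <;> rfl)
  have hadd (a b c : Λ) : f ![a, c] = f ![a, b] + f ![b, c] := by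
    have hface (j : Fin 3) : ![a, b, c] ∘ j.succAbove = ![![b, c], ![a, c], ![a, b]] j := by
      fin_cases j <;> funext k <;> fin_cases k <;> rfl
    have h : f ![b, c] - f ![a, c] + f ![a, b] = 0 := by
      simpa [gcob_apply, Fin.sum_univ_three, hface, sub_eq_add_neg] using
        congrFun (LinearMap.mem_ker.1 hcocycle) ![a, b, c]
    linarith
  let φ : Additive Λ →+ ℝ := AddMonoidHom.mk' (fun g => f ![1, g.toMul]) fun g h => by
    rw [hadd 1 g.toMul, ← hsmul g.toMul 1 h.toMul, mul_one, toMul_add]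
  have hφ : φ = 0 := addMonoidHom_eq_zero_of_bounded φ fun _ => hC _
  funext t
  calc f t = f ![t 0 * 1, t 0 * ((t 0)⁻¹ * t 1)] :=
        congrArg f (funext fun j => by fin_cases j <;> simp)
    _ = φ (.ofMul ((t 0)⁻¹ * t 1)) := hsmul _ _ _
    _ = 0 := by rw [hφ, AddMonoidHom.zero_apply]

instance subsingleton_Hb_one {Λ : Type*} [Group Λ] : Subsingleton (Hb Λ 1) := by
  refine subsingleton_of_forall_eq 0 fun φ => ?_
  obtain ⟨f, rfl⟩ := HbClass_surjective φ
  exact congrArg HbClass (Subtype.ext (eq_zero_of_mem_grpZ_one f.2))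

lemma hbNorm_zero {Λ : Type*} [Group Λ] {n : ℕ} : hbNorm (0 : Hb Λ n) = 0 :=
  le_antisymm ((hbNorm_HbClass_le 0).trans (supN_le le_rfl fun _ => by simp)) (hbNorm_nonneg _)

/-! ### The isometric embedding -/

lemma exists_linearMap_HbClass {V L : Type*} [Group L] {Q : V → Type*} [∀ v, Group (Q v)] {n : ℕ}
    (Z : (∀ v, grpZ (Q v) n) →ₗ[ℝ] grpZ L n)
    (hZ : ∀ f, (∀ v, (f v : Cochain (Q v) n) ∈ grpB (Q v) n) → (Z f : Cochain L n) ∈ grpB L n) :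
    ∃ Θ : (∀ v, Hb (Q v) n) →ₗ[ℝ] Hb L n, ∀ f, Θ (fun v => HbClass (f v)) = HbClass (Z f) := by
  let classes : (∀ v, grpZ (Q v) n) →ₗ[ℝ] ∀ v, Hb (Q v) n :=
    LinearMap.piMap fun v => Submodule.mkQ _
  have hsurj : Function.Surjective classes := Function.Surjective.piMap fun v => HbClass_surjective
  obtain ⟨s, hs⟩ := classes.exists_rightInverse_of_surjective (LinearMap.range_eq_top.2 hsurj)
  refine ⟨Submodule.mkQ _ ∘ₗ Z ∘ₗ s, fun f => HbClass_eq_iff.2 ?_⟩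
  rw [← AddSubgroupClass.coe_sub, LinearMap.comp_apply, ← map_sub]
  refine hZ _ fun v => HbClass_eq_iff.1 ?_
  exact congrFun (LinearMap.congr_fun hs (classes f)) v

namespace PingPong

variable {V L : Type*} [Group L] [Finite V] {Q : V → Type*} [∀ v, Group (Q v)]
  {i : ∀ v, Q v →* L} {S : V → Type*} [∀ v, MulAction (Q v) (S v)] {Y : Type*} [MulAction L Y]

theorem exists_isometric_section [Nonempty Y] (D : PingPong i S Y)
    {A : ∀ v, CochainMap (Q v) (Q v) (S v)} (hA : ∀ v, (A v).IsTransfer) {n : ℕ} :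
    ∃ Θ : (∀ v, Hb (Q v) (n + 2)) →ₗ[ℝ] Hb L (n + 2),
      (∀ φ, hbNorm (Θ φ) = ⨆ v, hbNorm (φ v)) ∧ ∀ φ v, hbRes (i v) (n + 2) (Θ φ) = φ v := by
  obtain ⟨y⟩ := ‹Nonempty Y›
  let Z : (∀ v, grpZ (Q v) (n + 2)) →ₗ[ℝ] grpZ L (n + 2) :=
    (D.combineAt hA y n ∘ₗ LinearMap.piMap fun v => (grpZ (Q v) (n + 2)).subtype).codRestrict _
      fun f => D.combineAt_mem_grpZ hA y fun v => (f v).2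
  obtain ⟨Θ, hΘ⟩ := exists_linearMap_HbClass Z fun f hf => D.combineAt_mem_grpB hA y hf
  have hres (φ) (v) : hbRes (i v) (n + 2) (Θ φ) = φ v := by
    choose f hf using fun v => HbClass_surjective (φ v)
    obtain rfl : (fun v => HbClass (f v)) = φ := funext hf
    rw [hΘ, hbRes_HbClass, HbClass_eq_iff]
    exact D.pbG_combineAt_sub_mem_grpB hA y (fun v => (f v).2) v
  refine ⟨Θ, fun φ => le_antisymm (le_of_forall_pos_le_add fun ε hε => ?_) ?_, hres⟩
  · choose f hf hfε using fun v => exists_HbClass_eq_supN_lt (φ v) hε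
    obtain rfl : (fun v => HbClass (f v)) = φ := funext hf
    have hC₀ : 0 ≤ (⨆ v, hbNorm (HbClass (f v))) + ε :=
      add_nonneg (Real.iSup_nonneg fun v => hbNorm_nonneg _) hε.le
    rw [hΘ]
    refine (hbNorm_HbClass_le _).trans (supN_le hC₀ fun t => ?_)
    refine D.abs_combine_le hA hC₀ (fun v s => ?_) _
    calc |(f v).1 s| ≤ supN (f v).1 := abs_le_supN (f v).2.1.1 s
      _ ≤ hbNorm (HbClass (f v)) + ε := (hfε v).le
      _ ≤ (⨆ v, hbNorm (HbClass (f v))) + ε := by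
        gcongr
        exact le_ciSup (f := fun v => hbNorm (HbClass (f v))) (Set.finite_range _).bddAbove v
  · refine Real.iSup_le (fun v => ?_) (hbNorm_nonneg _)
    rw [← hres φ v]
    exact hbNorm_hbRes_le _ _

end PingPong

namespace GraphOfGroups

variable {G : SerreGraph} {𝒢 : GraphOfGroups G}

lemma isAmenable_directionStabilizer (hamen : ∀ e, IsAmenable (𝒢.Ge e)) (v : G.V)
    (k : Option {e : G.E // G.t e = v}) : IsAmenable (𝒢.directionStabilizer v k) := by
  rcases k with _ | ⟨e, rfl⟩
  · exact isAmenable_of_subsingleton (⊥ : Subgroup (𝒢.Gv v))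
  · exact (hamen e).of_surjective (𝒢.h e).rangeRestrict_surjective

lemma exists_isTransfer (hcount : ∀ v, Countable (𝒢.Gv v)) (hamen : ∀ e, IsAmenable (𝒢.Ge e))
    (v : G.V) : ∃ A : CochainMap (𝒢.Gv v) (𝒢.Gv v) (𝒢.Direction v), A.IsTransfer := by
  obtain ⟨M, hM⟩ := exists_equivariant_means (isAmenable_directionStabilizer hamen v)
  have := hcount v
  exact CochainMap.exists_isTransfer M hM

end GraphOfGroups

theorem isometric_embedding_of_graph_of_groups_general
    (G : SerreGraph) [Finite G.V]
    (𝒢 : GraphOfGroups G)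
    (hcount : ∀ v : G.V, Countable (𝒢.Gv v))
    (hamen : ∀ e : G.E, IsAmenable (𝒢.Ge e))
    (T : Set G.E) (hT : G.IsSpanningTree T)
    (n : ℕ) (hn : 1 ≤ n) :
    ∃ Θ : (∀ v : G.V, Hb (𝒢.Gv v) n) →ₗ[ℝ] Hb (𝒢.pi1 T) n,
      (∀ φ : ∀ v : G.V, Hb (𝒢.Gv v) n, hbNorm (Θ φ) = ⨆ v : G.V, hbNorm (φ v)) ∧
      (∀ (φ : ∀ v : G.V, Hb (𝒢.Gv v) n) (v : G.V),
        hbRes (𝒢.vtxIncl T v) n (Θ φ) = φ v) := by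
  obtain rfl | ⟨m, rfl⟩ : n = 1 ∨ ∃ m, n = m + 2 := by
    rcases hn.eq_or_lt with rfl | hn
    exacts [.inl rfl, .inr (Nat.exists_eq_add_of_le' hn)]
  · refine ⟨0, fun φ => ?_, fun φ v => Subsingleton.elim _ _⟩
    simp [Subsingleton.elim φ 0, hbNorm_zero]
  · choose A hA using 𝒢.exists_isTransfer hcount hamen
    obtain ⟨_, ⟨D⟩⟩ := 𝒢.nonempty_pingPong hT
    exact D.exists_isometric_section hA

open GraphOfGroups in
/-- **Theorem A (Bucher–Burger–Frigerio–Iozzi–Pagliantini–Pozzetti).**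
Let `Γ = π₁(𝒢, T)` be the fundamental group of a graph of groups `𝒢` based on a finite
graph `G` (with spanning tree `T`). Suppose that every vertex group of `𝒢` is countable
and that every edge group of `𝒢` is amenable. Then for every `n ≥ 1` there is a linear
map `Θ : ⊕_{v ∈ V(G)} H_b^n(Γ_v) → H_b^n(Γ)` which is an isometric embedding with respect
to the max-norm on the direct sum, and which is a right inverse of the map
`⊕_{v} H(i_v) : H_b^n(Γ) → ⊕_{v ∈ V(G)} H_b^n(Γ_v)` induced by the canonical inclusions
`i_v : Γ_v → Γ`. -/
theorem isometric_embedding_of_graph_of_groups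
    (G : SerreGraph) [Fintype G.V] [Fintype G.E]
    (𝒢 : GraphOfGroups G)
    (hcount : ∀ v : G.V, Countable (𝒢.Gv v))
    (hamen : ∀ e : G.E, IsAmenable (𝒢.Ge e))
    (T : Set G.E) (hT : G.IsSpanningTree T)
    (n : ℕ) (hn : 1 ≤ n) :
    ∃ Θ : (∀ v : G.V, Hb (𝒢.Gv v) n) →ₗ[ℝ] Hb (𝒢.pi1 T) n,
      (∀ φ : ∀ v : G.V, Hb (𝒢.Gv v) n, hbNorm (Θ φ) = ⨆ v : G.V, hbNorm (φ v)) ∧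
      (∀ (φ : ∀ v : G.V, Hb (𝒢.Gv v) n) (v : G.V),
        hbRes (𝒢.vtxIncl T v) n (Θ φ) = φ v) := by
  exact isometric_embedding_of_graph_of_groups_general G 𝒢 hcount hamen T hT n hn

end GrpBC
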